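/- arXiv:2506.20809 — 3 statements merged into one kernel-verified Lean document; each statement's English description precedes it below -/
import Mathlib

section
/- For every integer n ≥ 0, every integer m ≥ 0, and every real x > 1, the derivative relation (1−x^2)·(Q_n^m)′(x) = (m−n−1)·Q_{n+1}^m(x) + (n+1)·x·Q_n^m(x) holds for the associated Legendre functions of the second kind. -/
noncomputable section

open Real MeasureTheory

/-- Legendre polynomial via Rodrigues' formula. -/
def legendreP (n : ℕ) (x : ℝ) : ℝ :=
  (1 / (2 ^ n * (n.factorial : ℝ))) * iteratedDeriv n (fun y : ℝ => (y ^ 2 - 1) ^ n) x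

/-- Legendre function of the second kind (Neumann's integral), for `x > 1`. -/
def legendreQ (n : ℕ) (x : ℝ) : ℝ :=
  (1 / 2) * ∫ t in (-1 : ℝ)..1, legendreP n t / (x - t)

/-- Associated Legendre function of the second kind, off the cut (`x > 1`). -/
def assocQ (n m : ℕ) (x : ℝ) : ℝ :=
  Real.sqrt (x ^ 2 - 1) ^ m * iteratedDeriv m (legendreQ n) x

open Polynomial in
def kerK (p : ℝ[X]) (b : ℕ) (x : ℝ) : ℝ := ∫ t in (-1 : ℝ)..1, p.eval t / (x - t) ^ b

lemma kerK_cont (p : Polynomial ℝ) (b : ℕ) {x : ℝ} (hx : 1 < x) :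
    ContinuousOn (fun t : ℝ => p.eval t / (x - t) ^ b) (Set.uIcc (-1) 1) := by
  apply ContinuousOn.div
  · exact p.continuous.continuousOn
  · fun_prop
  · intro t ht
    rw [Set.uIcc_of_le (by norm_num)] at ht
    have : 0 < x - t := by linarith [ht.2]
    positivity

lemma kerK_int (p : Polynomial ℝ) (b : ℕ) {x : ℝ} (hx : 1 < x) :
    IntervalIntegrable (fun t : ℝ => p.eval t / (x - t) ^ b) volume (-1) 1 :=
  (kerK_cont p b hx).intervalIntegrable

lemma kerK_ibp (p : Polynomial ℝ) (b : ℕ) {x : ℝ} (hx : 1 < x)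
    (h1 : p.eval 1 = 0) (h2 : p.eval (-1) = 0) :
    kerK (Polynomial.derivative p) b x = - (b : ℝ) * kerK p (b + 1) x := by
  have key : ∫ t in (-1 : ℝ)..1, ((Polynomial.derivative p).eval t / (x - t) ^ b
      + (b : ℝ) * (p.eval t / (x - t) ^ (b + 1))) =
      p.eval 1 / (x - 1) ^ b - p.eval (-1) / (x - (-1)) ^ b := by
    apply intervalIntegral.integral_eq_sub_of_hasDerivAt
      (f := fun t : ℝ => p.eval t / (x - t) ^ b)
    · intro t ht
      rw [Set.uIcc_of_le (by norm_num)] at ht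
      have hp : 0 < x - t := by linarith [ht.2]
      have hd := (p.hasDerivAt t).div ((((hasDerivAt_id t).const_sub x)).pow b)
        (by simpa using (pow_pos hp b).ne')
      refine hd.congr_deriv ?_
      rcases b with _ | b
      · simp
      · simp only [Pi.pow_apply, id, Nat.add_sub_cancel]
        field_simp
        push_cast
        ring
    · exact (kerK_int _ b hx).add ((kerK_int p (b + 1) hx).const_mul _)
  rw [intervalIntegral.integral_add (kerK_int _ b hx) ((kerK_int p (b + 1) hx).const_mul _),
    intervalIntegral.integral_const_mul, h1, h2] at key
  simp only [kerK]
  linarith [key, zero_div ((x - 1) ^ b), zero_div ((x - (-1)) ^ b)]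

lemma kerK_deriv (p : Polynomial ℝ) (b : ℕ) {x : ℝ} (hx : 1 < x) :
    HasDerivAt (kerK p b) (- (b : ℝ) * kerK p (b + 1) x) x := by
  obtain ⟨C, hC⟩ := (isCompact_uIcc (a := (-1 : ℝ)) (b := 1)).exists_bound_of_continuousOn
    (f := fun t => p.eval t) p.continuous.continuousOn
  set d := (x - 1) / 2 with hd
  have hd0 : 0 < d := by rw [hd]; linarith
  have hs : Set.Ioi (1 + d) ∈ nhds x := Ioi_mem_nhds (by rw [hd]; linarith)
  have := (intervalIntegral.hasDerivAt_integral_of_dominated_loc_of_deriv_le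
    (μ := volume) (a := -1) (b := 1)
    (F := fun y t => p.eval t / (y - t) ^ b)
    (F' := fun y t => - (b : ℝ) * (p.eval t / (y - t) ^ (b + 1)))
    (bound := fun _ => (b : ℝ) * (C / d ^ (b + 1)))
    (x₀ := x) hs ?_ (kerK_int p b hx) ?_ ?_ ?_ ?_).2
  · rw [intervalIntegral.integral_const_mul] at this
    exact this
  · filter_upwards [hs] with y hy
    have hy1 : 1 < y := by have := Set.mem_Ioi.1 hy; linarith
    exact (intervalIntegrable_iff.1 (kerK_int p b hy1)).aestronglyMeasurable
  · exact (intervalIntegrable_iff.1 ((kerK_int p (b + 1) hx).const_mul _)).aestronglyMeasurable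
  · refine Filter.Eventually.of_forall fun t ht y hy => ?_
    have hy1 := Set.mem_Ioi.1 hy
    have ht' := Set.uIoc_subset_uIcc ht
    have hb := hC t ht'
    rw [Set.uIcc_of_le (by norm_num)] at ht'
    have hp : d ≤ y - t := by linarith [ht'.2]
    have hp0 : 0 < y - t := by linarith
    have hC0 : 0 ≤ C := (norm_nonneg _).trans hb
    rw [norm_mul, norm_neg, norm_div, norm_pow, Real.norm_of_nonneg hp0.le,
      Real.norm_of_nonneg (Nat.cast_nonneg b)]
    gcongr
  · exact intervalIntegrable_const
  · refine Filter.Eventually.of_forall fun t ht y hy => ?_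
    have hy1 := Set.mem_Ioi.1 hy
    have ht' := Set.uIoc_subset_uIcc ht
    rw [Set.uIcc_of_le (by norm_num)] at ht'
    have hp : 0 < y - t := by linarith [ht'.2]
    have hd := (hasDerivAt_const y (p.eval t)).div ((((hasDerivAt_id y).sub_const t)).pow b)
        (by simpa using (pow_pos hp b).ne')
    refine hd.congr_deriv ?_
    rcases b with _ | b
    · simp
    · simp only [Pi.pow_apply, id, Nat.add_sub_cancel]
      field_simp
      push_cast
      ring

open Polynomial in
def pN (n : ℕ) : ℝ[X] := (X ^ 2 - 1) ^ n

open Polynomial in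
lemma pN_vanish (n j : ℕ) (hj : j < n) (c : ℝ) (hc : c ^ 2 = 1) :
    (derivative^[j] (pN n)).eval c = 0 := by
  have h := pow_sub_dvd_iterate_derivative_pow (X ^ 2 - 1 : ℝ[X]) n j
  have h2 := eval_dvd (x := c) h
  have : (eval c ((X ^ 2 - 1 : ℝ[X]) ^ (n - j))) = 0 := by
    simp [hc, Nat.sub_ne_zero_of_lt hj]
  rw [this] at h2
  exact zero_dvd_iff.1 h2

open Polynomial in
lemma iteratedDeriv_poly (p : ℝ[X]) (k : ℕ) :
    iteratedDeriv k (fun y : ℝ => p.eval y) = fun y => (derivative^[k] p).eval y := by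
  induction k with
  | zero => simp
  | succ k ih =>
    rw [iteratedDeriv_succ, ih, Function.iterate_succ_apply']
    funext y
    exact Polynomial.deriv _

open Polynomial in
lemma kerK_iter (n k : ℕ) (hk : k ≤ n) {x : ℝ} (hx : 1 < x) :
    kerK (derivative^[n] (pN n)) 1 x =
      (-1) ^ k * (k.factorial : ℝ) * kerK (derivative^[n - k] (pN n)) (k + 1) x := by
  induction k with
  | zero => simp
  | succ k ih =>
    rw [ih (by omega)]
    obtain ⟨j, rfl⟩ := Nat.exists_eq_add_of_lt hk
    have e1 : k + j + 1 - k = j + 1 := by omega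
    rw [e1, Function.iterate_succ_apply', kerK_ibp _ _ hx
      (pN_vanish _ _ (by omega) _ (by norm_num)) (pN_vanish _ _ (by omega) _ (by norm_num)),
      show k + j + 1 - (k + 1) = j by omega, Nat.factorial_succ]
    push_cast
    ring

lemma legendreQ_eq (n : ℕ) {x : ℝ} (hx : 1 < x) :
    legendreQ n x = (-1) ^ n / 2 ^ (n + 1) * kerK (pN n) (n + 1) x := by
  have h := kerK_iter n n le_rfl hx
  simp only [Nat.sub_self, Function.iterate_zero, id] at h
  have hP : ∀ t, legendreP n t = (1 / (2 ^ n * (n.factorial : ℝ))) *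
      (Polynomial.derivative^[n] (pN n)).eval t := by
    intro t
    have := congrFun (iteratedDeriv_poly (pN n) n) t
    rw [← this]
    simp [legendreP, pN]
  have : legendreQ n x = (1 / 2) * ((1 / (2 ^ n * (n.factorial : ℝ))) *
      kerK (Polynomial.derivative^[n] (pN n)) 1 x) := by
    simp only [legendreQ, kerK, hP, ← intervalIntegral.integral_const_mul, mul_div_assoc, pow_one]
  rw [this, h]
  have := Nat.factorial_ne_zero n
  field_simp
  try ring

lemma iteratedDeriv_Q (n m : ℕ) : ∀ {x : ℝ}, 1 < x →
    iteratedDeriv m (legendreQ n) x = (-1) ^ n / 2 ^ (n + 1) *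
      ((-1) ^ m * ((n + m).factorial / n.factorial : ℝ)) * kerK (pN n) (n + m + 1) x := by
  induction m with
  | zero =>
    intro x hx
    have := Nat.factorial_ne_zero n
    rw [iteratedDeriv_zero, legendreQ_eq n hx]
    simp [this]
  | succ m ih =>
    intro x hx
    rw [iteratedDeriv_succ]
    have he : iteratedDeriv m (legendreQ n) =ᶠ[nhds x] fun x => (-1) ^ n / 2 ^ (n + 1) *
      ((-1) ^ m * ((n + m).factorial / n.factorial : ℝ)) * kerK (pN n) (n + m + 1) x := by
      filter_upwards [Ioi_mem_nhds hx] with y hy using ih hy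
    rw [he.deriv_eq, ((kerK_deriv (pN n) (n + m + 1) hx).const_mul _).deriv,
      ← add_assoc n m 1, Nat.factorial_succ]
    push_cast
    ring

lemma iteratedDeriv_Q_hasDeriv (n m : ℕ) {x : ℝ} (hx : 1 < x) :
    HasDerivAt (iteratedDeriv m (legendreQ n)) (iteratedDeriv (m + 1) (legendreQ n) x) x := by
  have he : iteratedDeriv m (legendreQ n) =ᶠ[nhds x] fun x => (-1) ^ n / 2 ^ (n + 1) *
      ((-1) ^ m * ((n + m).factorial / n.factorial : ℝ)) * kerK (pN n) (n + m + 1) x := by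
    filter_upwards [Ioi_mem_nhds hx] with y hy using iteratedDeriv_Q n m hy
  rw [iteratedDeriv_succ]
  exact (((kerK_deriv (pN n) (n + m + 1) hx).const_mul _).congr_of_eventuallyEq
    he).differentiableAt.hasDerivAt

open Polynomial in
lemma kerK_rel (n b : ℕ) {x : ℝ} (hx : 1 < x) :
    2 * ((n : ℝ) + 1) * ((x ^ 2 - 1) * kerK (pN n) (b + 1) x - x * kerK (pN n) b x
      - kerK (pN (n + 1)) (b + 1) x) = - (b : ℝ) * kerK (pN (n + 1)) (b + 1) x := by
  have h1 := pN_vanish (n + 1) 0 (by omega) 1 (by norm_num)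
  have h2 := pN_vanish (n + 1) 0 (by omega) (-1) (by norm_num)
  rw [← kerK_ibp (pN (n + 1)) b hx h1 h2]
  simp only [kerK]
  rw [← intervalIntegral.integral_const_mul, ← intervalIntegral.integral_const_mul,
    ← intervalIntegral.integral_sub ((kerK_int _ _ hx).const_mul _) ((kerK_int _ _ hx).const_mul _),
    ← intervalIntegral.integral_sub (((kerK_int _ _ hx).const_mul _).sub
      ((kerK_int _ _ hx).const_mul _)) (kerK_int _ _ hx),
    ← intervalIntegral.integral_const_mul]
  apply intervalIntegral.integral_congr
  intro t ht
  rw [Set.uIcc_of_le (by norm_num)] at ht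
  have hp : x - t ≠ 0 := by linarith [ht.2]
  have hder : (derivative (pN (n + 1))).eval t = 2 * ((n : ℝ) + 1) * t * (t ^ 2 - 1) ^ n := by
    simp [pN, derivative_pow]
    ring
  simp only [hder]
  simp only [pN, eval_pow, eval_sub, eval_X, eval_one]
  field_simp
  ring

theorem assocQ_deriv_relation (n m : ℕ) (x : ℝ) (hx : 1 < x) :
    (1 - x ^ 2) * deriv (assocQ n m) x =
      ((m : ℝ) - n - 1) * assocQ (n + 1) m x + ((n : ℝ) + 1) * x * assocQ n m x := by
  have hpos : 0 < x ^ 2 - 1 := by nlinarith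
  have hs0 : 0 < √(x ^ 2 - 1) := Real.sqrt_pos.2 hpos
  have hs2 : √(x ^ 2 - 1) ^ 2 = x ^ 2 - 1 := Real.sq_sqrt hpos.le
  -- core relation
  have core : (1 - x ^ 2) * iteratedDeriv (m + 1) (legendreQ n) x =
      ((m : ℝ) - n - 1) * iteratedDeriv m (legendreQ (n + 1)) x
        + ((n : ℝ) + 1 + m) * x * iteratedDeriv m (legendreQ n) x := by
    have h := kerK_rel n (n + m + 1) hx
    rw [iteratedDeriv_Q n (m + 1) hx, iteratedDeriv_Q (n + 1) m hx, iteratedDeriv_Q n m hx,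
      show n + (m + 1) = n + m + 1 by omega, show n + 1 + m = n + m + 1 by omega,
      Nat.factorial_succ (n + m), Nat.factorial_succ n]
    have hn := Nat.factorial_ne_zero n
    have hn1 : (n : ℝ) + 1 ≠ 0 := by positivity
    generalize kerK (pN n) (n + m + 1 + 1) x = A at *
    generalize kerK (pN n) (n + m + 1) x = B at *
    generalize kerK (pN (n + 1)) (n + m + 1 + 1) x = C at *
    have hA : (x ^ 2 - 1) * A = x * B + C - ((n : ℝ) + m + 1) * C / (2 * (n + 1)) := by
      push_cast at h
      field_simp
      linarith
    have e : (1 - x ^ 2) * ((-1) ^ n / 2 ^ (n + 1) * ((-1) ^ (m + 1) *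
        (((n + m + 1) * (n + m).factorial : ℝ) / n.factorial)) * A) =
        (-1) ^ n / 2 ^ (n + 1) * ((-1) ^ m *
        (((n + m + 1) * (n + m).factorial : ℝ) / n.factorial)) * ((x ^ 2 - 1) * A) := by ring
    push_cast
    rw [e, hA]
    field_simp
    ring
  have hd1 : HasDerivAt (fun y : ℝ => √(y ^ 2 - 1)) (x / √(x ^ 2 - 1)) x := by
    have := ((((hasDerivAt_id x).pow 2).sub_const 1).sqrt (by simpa using hpos.ne'))
    refine this.congr_deriv ?_
    simp
    field_simp
  have hd := (hd1.pow m).mul (iteratedDeriv_Q_hasDeriv n m hx)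
  have hd' : deriv (assocQ n m) x = _ := hd.deriv
  rw [hd']
  simp only [assocQ, Pi.pow_apply]
  have e2 : (1 - x ^ 2) * ((m : ℝ) * √(x ^ 2 - 1) ^ (m - 1) * (x / √(x ^ 2 - 1))) =
      - (m : ℝ) * x * √(x ^ 2 - 1) ^ m := by
    rcases m with _ | k
    · simp
    · have : (1 - x ^ 2) = - √(x ^ 2 - 1) ^ 2 := by rw [hs2]; ring
      rw [this, Nat.add_sub_cancel]
      field_simp
      ring
  linear_combination iteratedDeriv m (legendreQ n) x * e2 + √(x ^ 2 - 1) ^ m * core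
end
end

section
/- Fix integers n ≥ 0 and 0 ≤ m ≤ n, and let g(u,v,φ) = P_n^m(u)·𝖯_n^m(v)·e^{imφ} (a regular solid prolate spheroidal harmonic in coordinate form). Then for every u > 1, v ∈ (−1,1), and φ ∈ ℝ, g is annihilated by the prolate spheroidal Laplacian: ∂_u((u^2−1)·∂_u g) + ∂_v((1−v^2)·∂_v g) + ((u^2−v^2)/((u^2−1)·(1−v^2)))·∂^2_{φφ} g = 0. -/
noncomputable section

open Real MeasureTheory

/-- Associated Legendre function of the first kind, off the cut (`x > 1`). -/
def assocP (n m : ℕ) (x : ℝ) : ℝ :=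
  Real.sqrt (x ^ 2 - 1) ^ m * iteratedDeriv m (legendreP n) x

/-- Ferrers function of the first kind, on the cut (`-1 ≤ v ≤ 1`). -/
def ferrersP (n m : ℕ) (v : ℝ) : ℝ :=
  Real.sqrt (1 - v ^ 2) ^ m * iteratedDeriv m (legendreP n) v

open Polynomial in
lemma aux_ode (n k : ℕ) : ((X:ℝ[X])^2 - 1) * derivative^[k+2] (((X:ℝ[X])^2-1)^n)
    + C (2*((k:ℝ)+1-n)) * X * derivative^[k+1] (((X:ℝ[X])^2-1)^n)
    + C (((k:ℝ)+1)*(k-2*n)) * derivative^[k] (((X:ℝ[X])^2-1)^n) = 0 := by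
  induction k with
  | zero =>
    have h : ((X:ℝ[X])^2 - 1) * derivative (((X:ℝ[X])^2-1)^n) = C (2*(n:ℝ)) * X * ((X:ℝ[X])^2-1)^n := by
      rcases n with _ | n
      · simp
      · rw [derivative_pow]
        simp only [Nat.add_sub_cancel, derivative_sub, derivative_X_pow, derivative_one, map_mul, map_natCast, map_ofNat]
        push_cast
        simp
        ring
    have h2 := congrArg derivative h
    simp only [derivative_mul, derivative_sub, derivative_X_pow, derivative_one, derivative_C, derivative_X] at h2
    simp only [Function.iterate_succ, Function.iterate_zero, Function.comp, id]
    simp at h2 ⊢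
    linear_combination h2
  | succ k ih =>
    have h2 := congrArg derivative ih
    simp only [derivative_mul, derivative_add, derivative_sub, derivative_X_pow, derivative_one, derivative_C, derivative_X, derivative_zero, ← Function.iterate_succ_apply' (f := derivative)] at h2
    simp only [Function.iterate_succ_apply'] at h2 ⊢
    have hC : (C (2:ℝ) : ℝ[X]) = 2 := map_ofNat C 2
    simp [hC] at h2 ⊢
    linear_combination h2

open Polynomial in
lemma aux_iter (p : ℝ[X]) (k : ℕ) : iteratedDeriv k (fun x => p.eval x) = fun x => (derivative^[k] p).eval x := by
  induction k with
  | zero => simp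
  | succ k ih =>
    rw [iteratedDeriv_succ, ih]
    funext x
    rw [Polynomial.deriv, Function.iterate_succ_apply']

open Polynomial in
lemma aux_leg (n m : ℕ) : ∃ Q : ℝ[X], (∀ x, iteratedDeriv m (legendreP n) x = Q.eval x) ∧
    ∀ x : ℝ, (x^2-1) * (derivative (derivative Q)).eval x + 2*((m:ℝ)+1)*x*(derivative Q).eval x
      = ((n:ℝ)*(n+1) - m*(m+1)) * Q.eval x := by
  set c : ℝ := 1 / (2 ^ n * (n.factorial : ℝ)) with hc
  have h1 : legendreP n = fun x => (C c * derivative^[n] (((X:ℝ[X])^2-1)^n)).eval x := by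
    funext x
    have := congrFun (aux_iter (((X:ℝ[X])^2-1)^n) n) x
    simp at this
    simp [legendreP, this, hc]
  refine ⟨C c * derivative^[m+n] (((X:ℝ[X])^2-1)^n), ?_, ?_⟩
  · intro x
    rw [h1, aux_iter, iterate_derivative_C_mul, Function.iterate_add_apply]
  · intro x
    have h := congrArg (fun p => c * p.eval x) (aux_ode n (m+n))
    simp only [Function.iterate_succ_apply', eval_add, eval_mul, eval_sub, eval_pow, eval_X, eval_one, eval_C, eval_zero] at h
    simp only [derivative_C_mul, eval_mul, eval_C]
    push_cast at h
    linear_combination h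

open Polynomial in
lemma aux_main (n m : ℕ) (σ : ℝ) (K : ℂ) (f : ℝ → ℝ)
    (hf : f = fun x => Real.sqrt (σ * (x^2-1)) ^ m * iteratedDeriv m (legendreP n) x)
    (x : ℝ) (hx : 0 < σ * (x^2-1)) :
    deriv (fun w : ℝ => ((w:ℂ)^2 - 1) * deriv (fun w' => ((f w' : ℝ):ℂ) * K) w) x
      = (((n:ℝ)*(n+1) + m^2/(x^2-1)) * f x : ℝ) * K := by
  obtain ⟨Q, hQ, hode⟩ := aux_leg n m
  simp only [hQ] at hf
  have hne : ∀ y : ℝ, 0 < σ * (y^2-1) → y^2-1 ≠ 0 := by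
    intro y hy h
    rw [h] at hy; simp at hy
  have hS : ∀ y : ℝ, 0 < σ * (y^2-1) → HasDerivAt (fun y : ℝ => Real.sqrt (σ * (y^2-1)) ^ m)
      (m * y / (y^2-1) * Real.sqrt (σ * (y^2-1)) ^ m) y := by
    intro y hy
    have h0 : HasDerivAt (fun y : ℝ => σ * (y^2-1)) (σ * (2*y)) y := by
      simpa using (((hasDerivAt_id y).pow 2).sub_const 1).const_mul σ
    have h := (h0.sqrt hy.ne').pow m
    refine h.congr_deriv ?_
    have hy' := hne y hy
    have hs : 0 < Real.sqrt (σ * (y^2-1)) := Real.sqrt_pos.2 hy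
    have hsq := Real.sq_sqrt hy.le
    generalize Real.sqrt (σ * (y^2-1)) = s at *
    rcases m with _ | m
    · simp
    · simp only [Nat.add_sub_cancel]
      rw [pow_succ]
      field_simp
      linear_combination (-1) * s^m * y * hsq
  have hev : ∀ᶠ w in nhds x, 0 < σ * (w^2-1) := by
    have hc : ContinuousAt (fun w : ℝ => σ * (w^2-1)) x := by fun_prop
    exact hc.eventually (lt_mem_nhds hx)
  have hd1 : ∀ y : ℝ, 0 < σ * (y^2-1) → HasDerivAt f
      (Real.sqrt (σ * (y^2-1)) ^ m * (m * y * Q.eval y + (y^2-1) * (derivative Q).eval y) / (y^2-1)) y := by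
    intro y hy
    rw [hf]
    refine ((hS y hy).mul (Q.hasDerivAt y)).congr_deriv ?_
    have := hne y hy
    field_simp
  have heq : (fun w : ℝ => ((w:ℂ)^2 - 1) * deriv (fun w' => ((f w' : ℝ):ℂ) * K) w) =ᶠ[nhds x]
      fun w => ((Real.sqrt (σ * (w^2-1)) ^ m * (m * w * Q.eval w + (w^2-1) * (derivative Q).eval w) : ℝ) : ℂ) * K := by
    filter_upwards [hev] with w hw
    rw [((hd1 w hw).ofReal_comp.mul_const K).deriv, ← mul_assoc]
    congr 1
    have := hne w hw
    have h3 : ((w:ℂ)^2-1) = ((w^2-1 : ℝ) : ℂ) := by push_cast; rfl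
    rw [h3, ← Complex.ofReal_mul]
    congr 1
    field_simp
  rw [heq.deriv_eq]
  have hin : HasDerivAt (fun w : ℝ => m * w * Q.eval w + (w^2-1) * (derivative Q).eval w)
      (m * Q.eval x + m * x * (derivative Q).eval x + (2 * x * (derivative Q).eval x + (x^2-1) * (derivative (derivative Q)).eval x)) x := by
    have a1 : HasDerivAt (fun w : ℝ => (m:ℝ) * w) m x := by simpa using (hasDerivAt_id x).const_mul (m:ℝ)
    have a2 : HasDerivAt (fun w : ℝ => w^2-1) (2*x) x := by simpa using ((hasDerivAt_id x).pow 2).sub_const 1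
    exact (a1.mul (Q.hasDerivAt x)).add (a2.mul ((derivative Q).hasDerivAt x))
  have hfin := (((hS x hx).mul hin).ofReal_comp.mul_const K).deriv
  refine Eq.trans hfin ?_
  congr 2
  rw [hf]
  have := hne x hx
  have ho := hode x
  simp only
  generalize Real.sqrt (σ * (x^2-1)) ^ m = s
  field_simp
  linear_combination (x^2-1) * s * ho

theorem regular_solid_prolate_harmonic (n m : ℕ) (hm : m ≤ n) (u v φ : ℝ)
    (hu : 1 < u) (hv : v ∈ Set.Ioo (-1 : ℝ) 1)
    (g : ℝ → ℝ → ℝ → ℂ)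
    (hg : g = fun (u' v' φ' : ℝ) =>
      ((assocP n m u' : ℝ) : ℂ) * ((ferrersP n m v' : ℝ) : ℂ) * Complex.exp (Complex.I * m * φ')) :
    deriv (fun w : ℝ => ((w : ℂ) ^ 2 - 1) * deriv (fun w' => g w' v φ) w) u +
      deriv (fun w : ℝ => (1 - (w : ℂ) ^ 2) * deriv (fun w' => g u w' φ) w) v +
      (((u ^ 2 - v ^ 2) / ((u ^ 2 - 1) * (1 - v ^ 2)) : ℝ) : ℂ) *
        iteratedDeriv 2 (fun w => g u v w) φ = 0 := by
  subst hg
  obtain ⟨hv1, hv2⟩ := hv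
  have hu2 : 0 < u^2-1 := by nlinarith
  have hv3 : 0 < 1-v^2 := by nlinarith
  have e1 := aux_main n m 1 (((ferrersP n m v : ℝ) : ℂ) * Complex.exp (Complex.I * m * φ)) (assocP n m)
    (by funext x; simp [assocP]) u (by linarith)
  have e2 := aux_main n m (-1) (((assocP n m u : ℝ) : ℂ) * Complex.exp (Complex.I * m * φ)) (ferrersP n m)
    (by funext x; simp [ferrersP]) v (by linarith)
  have e3 : deriv (fun w : ℝ => (1 - (w : ℂ) ^ 2) * deriv (fun w' => ((assocP n m u : ℝ) : ℂ) * ((ferrersP n m w' : ℝ) : ℂ) * Complex.exp (Complex.I * m * φ)) w) v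
      = - ((((n:ℝ)*(n+1) + m^2/(v^2-1)) * ferrersP n m v : ℝ) * (((assocP n m u : ℝ) : ℂ) * Complex.exp (Complex.I * m * φ))) := by
    rw [← e2, ← deriv.fun_neg]
    congr 1
    funext w
    rw [← neg_mul, neg_sub]
    congr 2
    funext w'
    ring
  have hexp : ∀ (K : ℂ) (t : ℝ), HasDerivAt (fun w : ℝ => K * Complex.exp (Complex.I * m * w))
      (K * (Complex.I * m) * Complex.exp (Complex.I * m * t)) t := by
    intro K t
    have h0 : HasDerivAt (fun w : ℝ => Complex.I * m * (w:ℂ)) (Complex.I * m) t := by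
      simpa using (Complex.ofRealCLM.hasDerivAt (x := t)).const_mul (Complex.I * m)
    exact (h0.cexp.const_mul K).congr_deriv (by ring)
  have e4 : ∀ K : ℂ, iteratedDeriv 2 (fun w : ℝ => K * Complex.exp (Complex.I * m * w)) φ
      = - (m:ℂ)^2 * K * Complex.exp (Complex.I * m * φ) := by
    intro K
    rw [iteratedDeriv_succ, iteratedDeriv_one, funext (fun t => (hexp K t).deriv), (hexp _ φ).deriv]
    linear_combination (K * (m:ℂ)^2 * Complex.exp (Complex.I * m * φ)) * Complex.I_sq
  simp only [mul_assoc] at e1 e3 e4 ⊢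
  have e4' := e4 ((assocP n m u : ℂ) * (ferrersP n m v : ℂ))
  simp only [mul_assoc] at e4'
  rw [e1, e3, e4']
  have c1 : (u:ℂ)^2-1 ≠ 0 := by exact_mod_cast hu2.ne'
  have c2 : 1-(v:ℂ)^2 ≠ 0 := by exact_mod_cast hv3.ne'
  have c3 : (v:ℂ)^2-1 = -(1-(v:ℂ)^2) := by ring
  push_cast
  rw [c3]
  generalize Complex.exp _ = E
  field_simp
  ring
end
end

section
/- (Prolate spheroidal double layer potential, exterior evaluation.) Fix a > 0, u₀ > 1, and integers n ≥ 0, 0 ≤ m ≤ n. Let the density be μ(s,t) = Y_n^m(s,t). Then for every exterior target point x = Φ(u,v,φ) with u > u₀, v ∈ (−1,1), φ ∈ ℝ, the double layer potential satisfies D[μ](x) = ((n−m)!/(n+m)!)·(−1)^m·(u₀^2−1)·(P_n^m)′(u₀)·Q_n^m(u)·Y_n^m(v,φ). -/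
noncomputable section

open Real MeasureTheory

/-- Prolate spheroidal coordinate map. -/
def prolate (a u v φ : ℝ) : EuclideanSpace ℝ (Fin 3) :=
  (WithLp.equiv 2 (Fin 3 → ℝ)).symm
    ![a * Real.sqrt (u ^ 2 - 1) * Real.sqrt (1 - v ^ 2) * Real.cos φ,
      a * Real.sqrt (u ^ 2 - 1) * Real.sqrt (1 - v ^ 2) * Real.sin φ,
      a * u * v]

/-- Surface spheroidal (= spherical) harmonic `Y_n^m(v, φ)`. -/
def sphY (n m : ℕ) (v φ : ℝ) : ℂ :=
  ((Real.sqrt ((2 * (n : ℝ) + 1) / (4 * Real.pi)) *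
      Real.sqrt (((n - m).factorial : ℝ) / ((n + m).factorial : ℝ)) * ferrersP n m v : ℝ) : ℂ) *
    Complex.exp (Complex.I * m * φ)

/-- Outward unit normal on the prolate spheroid `u = u₀`, at surface parameters `(s, t)`. -/
def unitNormalP (a u₀ s t : ℝ) : EuclideanSpace ℝ (Fin 3) :=
  ‖deriv (fun w => prolate a w s t) u₀‖⁻¹ • deriv (fun w => prolate a w s t) u₀

/-- Surface area element on the prolate spheroid `u = u₀`. -/
def areaElemP (a u₀ s : ℝ) : ℝ := a ^ 2 * Real.sqrt (u₀ ^ 2 - s ^ 2) * Real.sqrt (u₀ ^ 2 - 1)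

/-- Laplace double layer potential on the prolate spheroid `u = u₀`. -/
def doubleLayerP (a u₀ : ℝ) (μ : ℝ → ℝ → ℂ) (x : EuclideanSpace ℝ (Fin 3)) : ℂ :=
  ∫ t in (0 : ℝ)..(2 * Real.pi), ∫ s in (-1 : ℝ)..1,
    ((((inner ℝ (unitNormalP a u₀ s t) (x - prolate a u₀ s t) : ℝ) /
        (4 * Real.pi * ‖x - prolate a u₀ s t‖ ^ 3)) * areaElemP a u₀ s : ℝ) : ℂ) * μ s t


open Polynomial in
def rodr (n : ℕ) : Polynomial ℝ := (X ^ 2 - 1) ^ n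

open Polynomial in
def pnm (n m : ℕ) : Polynomial ℝ :=
  C (1 / (2 ^ n * (n.factorial : ℝ))) * derivative^[n + m] (rodr n)

lemma iteratedDeriv_eval (p : Polynomial ℝ) (k : ℕ) :
    iteratedDeriv k (fun x => p.eval x) = fun x => (Polynomial.derivative^[k] p).eval x := by
  induction k with
  | zero => simp
  | succ k ih =>
    rw [iteratedDeriv_succ, ih, Function.iterate_succ_apply']
    funext x
    exact Polynomial.deriv _

lemma legendreP_eq (n : ℕ) : legendreP n = fun x => (pnm n 0).eval x := by
  funext x
  have : (fun y : ℝ => (y ^ 2 - 1) ^ n) = fun y => (rodr n).eval y := by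
    funext y; simp [rodr]
  rw [legendreP, this, iteratedDeriv_eval]
  simp [pnm]

lemma pnm_derivative (n m : ℕ) : (pnm n m).derivative = pnm n (m + 1) := by
  simp only [pnm]
  rw [Polynomial.derivative_C_mul, ← Function.iterate_succ_apply' Polynomial.derivative, ← add_assoc]

lemma iteratedDeriv_legendreP (n m : ℕ) :
    iteratedDeriv m (legendreP n) = fun x => (pnm n m).eval x := by
  rw [legendreP_eq, iteratedDeriv_eval]
  funext x
  congr 1
  induction m with
  | zero => rfl
  | succ k ih => rw [Function.iterate_succ_apply', ih, pnm_derivative]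

open Polynomial in
lemma rodr_ode (n k : ℕ) :
    (X ^ 2 - 1) * derivative^[k + 2] (rodr n) + C (2 * ((k:ℝ) + 1 - n)) * X * derivative^[k + 1] (rodr n)
      + C (((k:ℝ) + 1) * (k - 2 * n)) * derivative^[k] (rodr n) = 0 := by
  have C2 : (C (2:ℝ) : ℝ[X]) = 2 := rfl
  induction k with
  | zero =>
    have h0 : (X ^ 2 - 1) * derivative (rodr n) = C (2 * (n:ℝ)) * X * rodr n := by
      rcases n with _ | n
      · simp [rodr]
      · simp only [rodr]
        rw [derivative_pow_succ]
        simp [C2]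
        ring
    have h1 := congrArg derivative h0
    simp only [derivative_mul, derivative_C, derivative_X] at h1
    simp [C2] at h1
    simp [Function.iterate_succ_apply', C2]
    linear_combination h1
  | succ k ih =>
    have h1 := congrArg derivative ih
    simp only [derivative_add, derivative_mul, derivative_C, derivative_X, ← Function.iterate_succ_apply' derivative] at h1
    simp [C2] at h1
    simp [C2]
    linear_combination h1

lemma pnm_ode (n m : ℕ) (x : ℝ) :
    (1 - x ^ 2) * (pnm n (m + 2)).eval x - 2 * (m + 1) * x * (pnm n (m + 1)).eval x
      + ((n:ℝ) * (n + 1) - m * (m + 1)) * (pnm n m).eval x = 0 := by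
  have h := congrArg (Polynomial.eval x) (rodr_ode n (n + m))
  simp at h
  simp only [pnm, Polynomial.eval_mul, Polynomial.eval_C, ← add_assoc, Function.iterate_succ_apply]
  linear_combination (-(1 / (2 ^ n * (n.factorial : ℝ)))) * h

open Polynomial in
lemma rodr_leibniz (n N : ℕ) (x : ℝ) : (derivative^[N] (rodr n)).eval x =
    ∑ k ∈ Finset.range (N + 1), (N.choose k : ℝ) * ((n.descFactorial (N - k) : ℝ) * (x + 1) ^ (n - (N - k))
      * ((n.descFactorial k : ℝ) * (x - 1) ^ (n - k))) := by
  have : rodr n = (X + C 1) ^ n * (X - C 1) ^ n := by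
    rw [rodr, ← mul_pow]; congr 1; simp; ring
  rw [this, iterate_derivative_mul, eval_finsetSum]
  refine Finset.sum_congr rfl fun k _ => ?_
  rw [iterate_derivative_X_sub_pow, iterate_derivative_X_add_pow]
  simp

lemma pnm_one (n m : ℕ) (hm : m ≤ n) :
    (pnm n m).eval 1 = ((n + m).factorial : ℝ) / (2 ^ m * m.factorial * (n - m).factorial) := by
  rw [pnm, Polynomial.eval_mul, Polynomial.eval_C, rodr_leibniz]
  rw [Finset.sum_eq_single n]
  · obtain ⟨d, rfl⟩ := Nat.exists_eq_add_of_le hm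
    simp only [Nat.add_sub_cancel_left, Nat.sub_self, pow_zero, mul_one]
    have e1 : (m + d).descFactorial m * d.factorial = (m + d).factorial := by
      have := Nat.factorial_mul_descFactorial (Nat.le_add_right m d)
      simp at this; linarith
    have e2 : (m + d + m).choose (m + d) * (m + d).factorial * m.factorial = (m + d + m).factorial := by
      have := Nat.choose_mul_factorial_mul_factorial (Nat.le_add_right (m + d) m)
      simpa using this
    have e1' : ((m + d).descFactorial m : ℝ) * d.factorial = (m + d).factorial := by exact_mod_cast e1
    have e2' : ((m + d + m).choose (m + d) : ℝ) * (m + d).factorial * m.factorial = (m + d + m).factorial := by exact_mod_cast e2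
    rw [Nat.descFactorial_self, ← e2', ← e1', pow_add]
    norm_num
    have : ((m.factorial : ℝ)) ≠ 0 := by positivity
    have : ((d.factorial : ℝ)) ≠ 0 := by positivity
    have h3 : ((m + d).descFactorial m : ℝ) ≠ 0 := by
      intro h; rw [h] at e1'
      have : ((m+d).factorial : ℝ) ≠ 0 := by positivity
      simp at e1'; exact this e1'.symm
    field_simp
  · intro k hk hkn
    rcases lt_or_gt_of_ne hkn with h | h
    · simp [zero_pow (Nat.sub_ne_zero_of_lt h)]
    · simp [Nat.descFactorial_of_lt h]
  · intro h; simp at h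

lemma pnm_one_pos (n m : ℕ) (hm : m ≤ n) : 0 < (pnm n m).eval 1 := by
  rw [pnm_one n m hm]; positivity

open Polynomial in
lemma rodr_flip (n m : ℕ) (hm : m ≤ n) (x : ℝ) :
    ((n - m).factorial : ℝ) * (x ^ 2 - 1) ^ m * (derivative^[n + m] (rodr n)).eval x =
      ((n + m).factorial : ℝ) * (derivative^[n - m] (rodr n)).eval x := by
  obtain ⟨d, rfl⟩ := Nat.exists_eq_add_of_le hm
  rw [rodr_leibniz, rodr_leibniz]
  simp only [Nat.add_sub_cancel_left]
  have : Finset.range (m + d + m + 1) = Finset.range (m + (d + 1) + m) := by congr 1; ring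
  rw [this, Finset.sum_range_add, Finset.sum_range_add]
  have z1 : ∑ k ∈ Finset.range m, ((m + d + m).choose k : ℝ) * (((m+d).descFactorial (m + d + m - k) : ℝ) * (x + 1) ^ (m + d - (m + d + m - k))
      * (((m+d).descFactorial k : ℝ) * (x - 1) ^ (m + d - k))) = 0 := by
    refine Finset.sum_eq_zero fun k hk => ?_
    rw [Finset.mem_range] at hk
    rw [Nat.descFactorial_of_lt (show m + d < m + d + m - k by omega)]; simp
  have z2 : ∑ k ∈ Finset.range m, ((m + d + m).choose (m + (d+1) + k) : ℝ) * (((m+d).descFactorial (m + d + m - (m + (d+1) + k)) : ℝ) * (x + 1) ^ (m + d - (m + d + m - (m + (d+1) + k)))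
      * (((m+d).descFactorial (m + (d+1) + k) : ℝ) * (x - 1) ^ (m + d - (m + (d+1) + k)))) = 0 := by
    refine Finset.sum_eq_zero fun k hk => ?_
    rw [Nat.descFactorial_of_lt (show m + d < m + (d+1) + k by omega)]; simp
  rw [z1, z2, zero_add, add_zero, Finset.mul_sum, Finset.mul_sum]
  refine Finset.sum_congr rfl fun j hj => ?_
  rw [Finset.mem_range] at hj
  obtain ⟨i, rfl⟩ := Nat.exists_eq_add_of_le (show j ≤ d by omega)
  rw [show m + (j + i) + m - (m + j) = m + i by omega, show m + (j+i) - (m + i) = j by omega,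
    show m + (j+i) - (m+j) = i by omega, show j + i - j = i by omega, show m + (j+i) - i = m + j by omega,
    show m + (j+i) - j = m + i by omega]
  have a1 : ((m + (j+i) + m).choose (m+j) : ℝ) * (m+j).factorial * (m+i).factorial = (m + (j+i) + m).factorial := by
    have := Nat.choose_mul_factorial_mul_factorial (show m + j ≤ m + (j+i) + m by omega)
    rw [show m + (j + i) + m - (m + j) = m + i by omega] at this
    exact_mod_cast this
  have a2 : ((j+i).choose j : ℝ) * j.factorial * i.factorial = (j+i).factorial := by
    have := Nat.choose_mul_factorial_mul_factorial (show j ≤ j+i by omega)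
    rw [show j + i - j = i by omega] at this
    exact_mod_cast this
  have df : ∀ p q N : ℕ, p + q = N → (q.factorial : ℝ) * (N.descFactorial p : ℝ) = N.factorial := by
    rintro p q N rfl
    have := Nat.factorial_mul_descFactorial (Nat.le_add_right p q)
    simp at this; exact_mod_cast this
  have b1 := df (m + i) j (m + (j+i)) (by ring)
  have b2 := df (m + j) i (m + (j+i)) (by ring)
  have b3 := df i (m + j) (m + (j+i)) (by ring)
  have b4 := df j (m + i) (m + (j+i)) (by ring)
  have f1 : ((m+j).factorial : ℝ) ≠ 0 := by positivity
  have f2 : ((m+i).factorial : ℝ) ≠ 0 := by positivity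
  have f3 : (j.factorial : ℝ) ≠ 0 := by positivity
  have f4 : (i.factorial : ℝ) ≠ 0 := by positivity
  rw [← a1, ← a2]
  rw [eq_div_of_mul_eq f3 ((mul_comm _ _).trans b1),
    eq_div_of_mul_eq f4 ((mul_comm _ _).trans b2),
    eq_div_of_mul_eq f1 ((mul_comm _ _).trans b3),
    eq_div_of_mul_eq f2 ((mul_comm _ _).trans b4)]
  have : (x^2-1)^m = (x+1)^m * (x-1)^m := by rw [← mul_pow]; congr 1; ring
  rw [this, pow_add, pow_add]
  field_simp

open Polynomial in
lemma rodr_zero (n i : ℕ) (hi : i < n) (x : ℝ) (hx : x ^ 2 = 1) :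
    (derivative^[i] (rodr n)).eval x = 0 := by
  have h := pow_sub_dvd_iterate_derivative_pow (X ^ 2 - 1 : ℝ[X]) n i
  obtain ⟨q, hq⟩ := h
  rw [rodr, hq]
  simp [hx, zero_pow (Nat.sub_ne_zero_of_lt hi)]

lemma hasDerivAt_param {Y : Type*} [TopologicalSpace Y] [MeasurableSpace Y] [OpensMeasurableSpace Y]
    [SecondCountableTopology Y] [T2Space Y]
    (μ : Measure Y) [IsFiniteMeasureOnCompacts μ] (S : Set Y) (hS : IsCompact S) (hSm : MeasurableSet S)
    (F F' : ℝ → Y → ℝ) (α β : ℝ)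
    (hF : ContinuousOn (fun q : ℝ × Y => F q.1 q.2) (Set.Ioo α β ×ˢ S))
    (hF' : ContinuousOn (fun q : ℝ × Y => F' q.1 q.2) (Set.Ioo α β ×ˢ S))
    (hd : ∀ x ∈ Set.Ioo α β, ∀ y ∈ S, HasDerivAt (fun x => F x y) (F' x y) x)
    (x : ℝ) (hx : x ∈ Set.Ioo α β) :
    HasDerivAt (fun x => ∫ y in S, F x y ∂μ) (∫ y in S, F' x y ∂μ) x := by
  have slice : ∀ G : ℝ → Y → ℝ, ContinuousOn (fun q : ℝ × Y => G q.1 q.2) (Set.Ioo α β ×ˢ S) →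
      ∀ x ∈ Set.Ioo α β, ContinuousOn (G x) S := by
    intro G hG x hx
    exact hG.comp (f := fun y => (x, y)) (by fun_prop) (fun y hy => ⟨hx, hy⟩)
  obtain ⟨ε, hε, hball⟩ := Metric.isOpen_iff.1 (isOpen_Ioo (a := α) (b := β)) x hx
  have hsub : Metric.closedBall x (ε / 2) ⊆ Set.Ioo α β :=
    (Metric.closedBall_subset_ball (by linarith)).trans hball
  have hK : IsCompact (Metric.closedBall x (ε / 2) ×ˢ S) := (isCompact_closedBall x _).prod hS
  obtain ⟨C, hC⟩ := hK.exists_bound_of_continuousOn (hF'.mono (Set.prod_mono hsub le_rfl))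
  have hμ : μ S < ⊤ := hS.measure_lt_top
  have : IsFiniteMeasure (μ.restrict S) := ⟨by simpa using hμ⟩
  refine (hasDerivAt_integral_of_dominated_loc_of_deriv_le (μ := μ.restrict S) (F := F) (F' := F')
    (bound := fun _ => C) (s := Metric.closedBall x (ε/2)) (Metric.closedBall_mem_nhds x (by linarith)) ?_ ?_ ?_ ?_ ?_ ?_).2
  · filter_upwards [isOpen_Ioo.mem_nhds hx] with z hz
    exact (slice F hF z hz).aestronglyMeasurable_of_isCompact hS hSm
  · exact (slice F hF x hx).integrableOn_compact hS
  · exact (slice F' hF' x hx).aestronglyMeasurable_of_isCompact hS hSm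
  · filter_upwards [ae_restrict_mem hSm] with y hy z hz
    exact hC (z, y) ⟨hz, hy⟩
  · exact integrable_const _
  · filter_upwards [ae_restrict_mem hSm] with y hy z hz
    exact hd z (hsub hz) y hy

/-- Uniqueness of the regular solution of a singular second order ODE. -/
lemma ode_unique (T k l K : ℝ) (hk : 0 < k) (σ σ' g g' g'' : ℝ → ℝ)
    (hg : ∀ x ∈ Set.Icc 0 T, HasDerivAt g (g' x) x) (hg' : ∀ x ∈ Set.Icc 0 T, HasDerivAt g' (g'' x) x)
    (ode : ∀ x ∈ Set.Icc 0 T, σ x * g'' x + k * σ' x * g' x = l * σ x * g x)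
    (hσ0 : σ 0 = 0) (hσ0' : σ' 0 ≠ 0) (hσ : ∀ x ∈ Set.Ioc 0 T, 0 < σ x)
    (hK : ∀ x ∈ Set.Ioc 0 T, - σ' x ≤ K * σ x) (hK0 : 0 ≤ K)
    (h0 : g 0 = 0) : ∀ x ∈ Set.Icc 0 T, g x = 0 := by
  intro x hx
  have hT : (0:ℝ) ∈ Set.Icc 0 T := ⟨le_rfl, hx.1.trans hx.2⟩
  have h0' : g' 0 = 0 := by
    have := ode 0 hT
    rw [hσ0] at this
    simp at this
    rcases this with (h | h) | h
    · exact absurd h hk.ne'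
    · exact absurd h hσ0'
    · exact h
  set M := |1 + l| + 2 * k * K with hM
  let e : ℝ → ℝ := fun x => (g x ^ 2 + g' x ^ 2) * exp (-(M * x))
  have he : ∀ x ∈ Set.Icc 0 T, HasDerivAt e ((2 * g x * g' x + 2 * g' x * g'' x) * exp (-(M * x))
      + (g x ^ 2 + g' x ^ 2) * (exp (-(M * x)) * -M)) x := by
    intro x hx
    have h1 := (hg x hx).pow 2
    have h2 := (hg' x hx).pow 2
    have h3 : HasDerivAt (fun x => -(M * x)) (-M) x := by
      refine ((hasDerivAt_id x).const_mul M).neg.congr_deriv (by simp)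
    have := (h1.add h2).mul h3.exp
    refine this.congr_deriv ?_
    simp
  have anti : AntitoneOn e (Set.Icc 0 T) := by
    refine antitoneOn_of_hasDerivWithinAt_nonpos (convex_Icc 0 T) (fun x hx => (he x hx).continuousAt.continuousWithinAt)
      (f' := fun x => ((2 * g x * g' x + 2 * g' x * g'' x) * exp (-(M * x))
      + (g x ^ 2 + g' x ^ 2) * (exp (-(M * x)) * -M))) (fun x hx => (he x (interior_subset hx)).hasDerivWithinAt) ?_
    intro x hx
    rw [interior_Icc] at hx
    have hx' : x ∈ Set.Icc 0 T := ⟨hx.1.le, hx.2.le⟩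
    have hs := hσ x ⟨hx.1, hx.2.le⟩
    have hode := ode x hx'
    have hKx := hK x ⟨hx.1, hx.2.le⟩
    have key : 2 * g x * g' x + 2 * g' x * g'' x ≤ M * (g x ^ 2 + g' x ^ 2) := by
      have e1 : g' x * g'' x ≤ l * g x * g' x + k * K * g' x ^ 2 := by
        have : σ x * (g' x * g'' x) ≤ σ x * (l * g x * g' x + k * K * g' x ^ 2) := by
          have : σ x * (g' x * g'' x) = σ x * (l * g x * g' x) + k * (- σ' x) * g' x ^ 2 := by
            linear_combination g' x * hode
          rw [this]
          have : k * (- σ' x) * g' x ^ 2 ≤ k * (K * σ x) * g' x ^ 2 := by gcongr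
          nlinarith
        exact le_of_mul_le_mul_left this hs
      have e2 : 2 * ((1 + l) * (g x * g' x)) ≤ |1 + l| * (g x ^ 2 + g' x ^ 2) := by
        have a1 : (1 + l) * (g x * g' x) ≤ |1 + l| * |g x * g' x| := by
          rw [← abs_mul]; exact le_abs_self _
        have a2 : 2 * |g x * g' x| ≤ g x ^ 2 + g' x ^ 2 := by
          rw [abs_mul]; nlinarith [sq_nonneg (|g x| - |g' x|), sq_abs (g x), sq_abs (g' x)]
        nlinarith [abs_nonneg (1 + l)]
      have e3 : 0 ≤ 2 * k * K * g x ^ 2 := by positivity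
      rw [hM]; nlinarith
    have := (exp_pos (-(M * x)))
    have : (2 * g x * g' x + 2 * g' x * g'' x - M * (g x ^ 2 + g' x ^ 2)) * exp (-(M*x)) ≤ 0 :=
      mul_nonpos_of_nonpos_of_nonneg (by linarith) this.le
    linarith
  have h := anti hT hx hx.1
  simp only [e, h0, h0'] at h
  have hp := exp_pos (-(M * x))
  have : g x ^ 2 + g' x ^ 2 ≤ 0 := by
    by_contra hc
    push Not at hc
    have := mul_pos hc hp
    simp at h
    linarith
  nlinarith [sq_nonneg (g x), sq_nonneg (g' x), pow_eq_zero_iff (two_ne_zero) (a := g x)]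

open Polynomial in
lemma cheb_step (N : ℤ) (k : ℕ) (τ : ℝ) :
    HasDerivAt (fun τ => sin τ ^ (2 * k + 1) * (derivative^[k+1] (Chebyshev.T ℝ N)).eval (cos τ))
      (((N:ℝ) ^ 2 - k ^ 2) * (sin τ ^ (2 * k) * (derivative^[k] (Chebyshev.T ℝ N)).eval (cos τ))) τ := by
  have h1 := ((derivative^[k+1] (Chebyshev.T ℝ N)).hasDerivAt (cos τ)).comp τ (hasDerivAt_cos τ)
  have h2 := ((hasDerivAt_sin τ).pow (2 * k + 1)).mul h1
  refine h2.congr_deriv ?_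
  have := Chebyshev.one_sub_X_sq_mul_iterate_derivative_T_eval (R := ℝ) N k (cos τ)
  rw [← Function.iterate_succ_apply' derivative]
  simp only [Function.comp, Nat.add_sub_cancel, Pi.pow_apply]
  push_cast
  have s2 : 1 - cos τ ^ 2 = sin τ ^ 2 := by rw [← sin_sq_add_cos_sq τ]; ring
  rw [s2] at this
  have hp : sin τ ^ (2 * k + 1) = sin τ ^ (2*k) * sin τ := pow_succ _ _
  rw [hp]
  simp only [Function.iterate_succ_apply] at this ⊢
  linear_combination (-(sin τ ^ (2*k))) * this

/-- Lifting of the Fourier coefficient. -/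
lemma cos_lift (m : ℕ) (A B : ℝ) (hpos : ∀ τ : ℝ, 0 < A - 2 * B * cos τ) :
    ∫ τ in (0:ℝ)..(2 * π), cos (m * τ) * (A - 2 * B * cos τ) ^ (-(1/2) : ℝ) =
      B ^ m * ∫ τ in (0:ℝ)..(2 * π), sin τ ^ (2 * m) * (A - 2 * B * cos τ) ^ (-(m:ℝ) - 1/2) := by
  set T := Polynomial.Chebyshev.T ℝ (m:ℤ) with hT
  let J : ℕ → ℝ := fun k => ∫ τ in (0:ℝ)..(2 * π),
    (sin τ ^ (2 * k) * (Polynomial.derivative^[k] T).eval (cos τ)) * (A - 2 * B * cos τ) ^ (-(k:ℝ) - 1/2)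
  have hcont : ∀ r : ℝ, Continuous fun τ => (A - 2 * B * cos τ) ^ r := fun r =>
    Continuous.rpow_const (by fun_prop) (fun τ => Or.inl (hpos τ).ne')
  have step : ∀ k : ℕ, ((m:ℝ) ^ 2 - k ^ 2) * J k = B * (2 * k + 1) * J (k + 1) := by
    intro k
    have hu : ∀ τ ∈ Set.uIcc 0 (2 * π), HasDerivAt (fun τ => (A - 2 * B * cos τ) ^ (-(k:ℝ) - 1/2))
        (-(B * (2 * k + 1)) * (sin τ * (A - 2 * B * cos τ) ^ (-((k+1 : ℕ):ℝ) - 1/2))) τ := by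
      intro τ _
      have h1 : HasDerivAt (fun τ => A - 2 * B * cos τ) (2 * B * sin τ) τ := by
        have := ((hasDerivAt_cos τ).const_mul (2 * B)).const_sub A
        refine this.congr_deriv (by ring)
      have := h1.rpow_const (p := -(k:ℝ) - 1/2) (Or.inl (hpos τ).ne')
      refine this.congr_deriv ?_
      rw [show -(k:ℝ) - 1/2 - 1 = -((k+1 : ℕ):ℝ) - 1/2 by push_cast; ring]
      ring
    have hv := fun τ (_ : τ ∈ Set.uIcc 0 (2 * π)) => cheb_step (m:ℤ) k τ
    have ibp := intervalIntegral.integral_mul_deriv_eq_deriv_mul hu hv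
      (Continuous.intervalIntegrable (by have := hcont (-((k+1 : ℕ):ℝ) - 1/2); fun_prop) _ _)
      (Continuous.intervalIntegrable (by fun_prop) _ _)
    simp only [sin_two_pi, sin_zero] at ibp
    simp only [J]
    rw [← intervalIntegral.integral_const_mul, ← intervalIntegral.integral_const_mul]
    have z : (0:ℝ) ^ (2 * k + 1) = 0 := zero_pow (by omega)
    rw [z] at ibp
    simp only [zero_mul, mul_zero, sub_zero, zero_sub] at ibp
    rw [← intervalIntegral.integral_neg] at ibp
    convert ibp using 1
    · congr 1; funext τ; simp only [hT]; push_cast; ring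
    · congr 1; funext τ; simp only [hT]; rw [show 2 * (k+1) = 2 * k + 1 + 1 by ring, pow_succ (sin τ)]; ring
  have all : ∀ k : ℕ, (∏ l ∈ Finset.range k, ((m:ℝ) ^ 2 - l ^ 2)) * J 0 =
      B ^ k * (∏ l ∈ Finset.range k, (2 * (l:ℝ) + 1)) * J k := by
    intro k
    induction k with
    | zero => simp
    | succ k ih =>
      rw [Finset.prod_range_succ, Finset.prod_range_succ, pow_succ B k]
      generalize (∏ l ∈ Finset.range k, ((m:ℝ) ^ 2 - l ^ 2)) = P at *
      linear_combination ((m:ℝ)^2 - k^2) * ih + B ^ k * (∏ l ∈ Finset.range k, (2 * (l:ℝ) + 1)) * step k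
  have hm := all m
  have h1 := Polynomial.Chebyshev.iterate_derivative_T_eval_one (R := ℝ) (m:ℤ) m
  have hdeg : (Polynomial.derivative^[m] T).natDegree = 0 := by
    have := Polynomial.natDegree_iterate_derivative T m
    rw [hT, Polynomial.Chebyshev.natDegree_T] at this
    simp at this
    exact this
  obtain ⟨c, hc⟩ := Polynomial.natDegree_eq_zero.1 hdeg
  rw [← hT, ← hc] at h1
  simp only [Polynomial.eval_C] at h1
  push_cast at h1
  have hJ0 : J 0 = ∫ τ in (0:ℝ)..(2 * π), cos (m * τ) * (A - 2 * B * cos τ) ^ (-(1/2) : ℝ) := by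
    simp only [J]
    congr 1; funext τ
    simp only [hT, Function.iterate_zero, id]
    have := Polynomial.Chebyshev.T_real_cos τ (m:ℤ)
    rw [this]
    norm_num
  have hJm : J m = c * ∫ τ in (0:ℝ)..(2 * π), sin τ ^ (2 * m) * (A - 2 * B * cos τ) ^ (-(m:ℝ) - 1/2) := by
    simp only [J]
    rw [← hc, ← intervalIntegral.integral_const_mul]
    congr 1; funext τ
    simp; ring
  rw [hJ0, hJm] at hm
  have hne : (∏ l ∈ Finset.range m, ((m:ℝ) ^ 2 - l ^ 2)) ≠ 0 := by
    rw [Finset.prod_ne_zero_iff]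
    intro l hl
    rw [Finset.mem_range] at hl
    have : (l:ℝ) < m := by exact_mod_cast hl
    have : (0:ℝ) ≤ l := by positivity
    nlinarith
  apply mul_left_cancel₀ hne
  rw [hm, ← h1]
  ring

lemma hasDerivAt_param1 (a b : ℝ) (hab : a ≤ b) (F F' : ℝ → ℝ → ℝ) (α β : ℝ)
    (hF : ContinuousOn (fun q : ℝ × ℝ => F q.1 q.2) (Set.Ioo α β ×ˢ Set.Icc a b))
    (hF' : ContinuousOn (fun q : ℝ × ℝ => F' q.1 q.2) (Set.Ioo α β ×ˢ Set.Icc a b))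
    (hd : ∀ x ∈ Set.Ioo α β, ∀ y ∈ Set.Icc a b, HasDerivAt (fun x => F x y) (F' x y) x)
    (x : ℝ) (hx : x ∈ Set.Ioo α β) :
    HasDerivAt (fun x => ∫ y in a..b, F x y) (∫ y in a..b, F' x y) x := by
  have := hasDerivAt_param volume (Set.Icc a b) isCompact_Icc measurableSet_Icc F F' α β hF hF' hd x hx
  simpa only [intervalIntegral.integral_of_le hab, ← integral_Icc_eq_integral_Ioc] using this

lemma legendreQ_deriv (n k : ℕ) : ∀ x : ℝ, 1 < x → iteratedDeriv k (legendreQ n) x =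
    (1 / 2) * ((-1) ^ k * k.factorial * ∫ t in (-1:ℝ)..1, (pnm n 0).eval t * ((x - t) ^ (k + 1))⁻¹) := by
  induction k with
  | zero =>
    intro x hx
    simp [legendreQ, legendreP_eq, div_eq_mul_inv]
  | succ k ih =>
    intro x hx
    rw [iteratedDeriv_succ]
    have ev : iteratedDeriv k (legendreQ n) =ᶠ[nhds x] fun x => (1 / 2) * ((-1) ^ k * k.factorial *
        ∫ t in (-1:ℝ)..1, (pnm n 0).eval t * ((x - t) ^ (k + 1))⁻¹) := by
      filter_upwards [isOpen_Ioi.mem_nhds hx] with z hz using ih z hz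
    rw [ev.deriv_eq]
    have hne : ∀ q ∈ Set.Ioo 1 (x + 1) ×ˢ Set.Icc (-1:ℝ) 1, ∀ j : ℕ, (q.1 - q.2) ^ j ≠ 0 := by
      intro q hq j
      have h1 := hq.1.1; have h2 := hq.2.2
      exact pow_ne_zero _ (by linarith)
    have hd := hasDerivAt_param1 (-1) 1 (by norm_num)
      (fun x t => (pnm n 0).eval t * ((x - t) ^ (k + 1))⁻¹)
      (fun x t => (pnm n 0).eval t * (-((k:ℝ) + 1) * ((x - t) ^ (k + 2))⁻¹)) 1 (x + 1)
      (by
        refine ContinuousOn.mul (by fun_prop) (ContinuousOn.inv₀ (by fun_prop) fun q hq => hne q hq _))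
      (by
        refine ContinuousOn.mul (by fun_prop) (ContinuousOn.mul (by fun_prop) (ContinuousOn.inv₀ (by fun_prop) fun q hq => hne q hq _)))
      (by
        intro z hz t ht
        have h0 := hne (z, t) ⟨hz, ht⟩ 1
        simp at h0
        refine HasDerivAt.const_mul _ ?_
        have h1 : HasDerivAt (fun z => z - t) 1 z := (hasDerivAt_id z).sub_const t
        refine ((h1.pow (k + 1)).inv (pow_ne_zero _ h0)).congr_deriv ?_
        simp
        field_simp
        ring)
      x ⟨hx, by linarith⟩
    rw [((hd.const_mul _).const_mul _).deriv]
    have : (∫ t in (-1:ℝ)..1, (pnm n 0).eval t * (-((k:ℝ) + 1) * ((x - t) ^ (k + 2))⁻¹)) =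
        -((k:ℝ) + 1) * ∫ t in (-1:ℝ)..1, (pnm n 0).eval t * ((x - t) ^ (k + 1 + 1))⁻¹ := by
      rw [← intervalIntegral.integral_const_mul]
      congr 1; funext t; ring
    rw [this, Nat.factorial_succ, pow_succ]
    push_cast
    ring

open Polynomial in
lemma rodr_ibp (n : ℕ) (x : ℝ) (hx : 1 < x) (j : ℕ) : j ≤ n → ∀ r : ℕ,
    (r.factorial : ℝ) * ∫ t in (-1:ℝ)..1, (derivative^[j] (rodr n)).eval t * ((x - t) ^ (r + 1))⁻¹ =
      (-1) ^ j * (r + j).factorial * ∫ t in (-1:ℝ)..1, (rodr n).eval t * ((x - t) ^ (r + j + 1))⁻¹ := by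
  induction j with
  | zero => intro _ r; simp
  | succ j ih =>
    intro hj r
    have hne : ∀ t ∈ Set.uIcc (-1:ℝ) 1, x - t ≠ 0 := by
      intro t ht
      rw [Set.uIcc_of_le (by norm_num)] at ht
      linarith [ht.2]
    have hu : ∀ t ∈ Set.uIcc (-1:ℝ) 1, HasDerivAt (fun t => ((x - t) ^ (r + 1))⁻¹)
        (((r:ℝ) + 1) * ((x - t) ^ (r + 2))⁻¹) t := by
      intro t ht
      have h1 : HasDerivAt (fun t => x - t) (-1) t := (hasDerivAt_id t).const_sub x
      have h0 := hne t ht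
      refine ((h1.pow (r + 1)).inv (pow_ne_zero _ h0)).congr_deriv ?_
      simp
      field_simp
      ring
    have hv : ∀ t ∈ Set.uIcc (-1:ℝ) 1, HasDerivAt (fun t => (derivative^[j] (rodr n)).eval t)
        ((derivative^[j + 1] (rodr n)).eval t) t := by
      intro t _
      rw [Function.iterate_succ_apply']
      exact Polynomial.hasDerivAt _ t
    have ibp := intervalIntegral.integral_mul_deriv_eq_deriv_mul hu hv
      (ContinuousOn.intervalIntegrable (ContinuousOn.mul (by fun_prop) (ContinuousOn.inv₀ (by fun_prop)
        fun t ht => pow_ne_zero _ (hne t ht))))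
      (Continuous.intervalIntegrable (by fun_prop) _ _)
    rw [rodr_zero n j (by omega) 1 (by norm_num), rodr_zero n j (by omega) (-1) (by norm_num)] at ibp
    have e1 : ∫ t in (-1:ℝ)..1, (derivative^[j+1] (rodr n)).eval t * ((x - t) ^ (r + 1))⁻¹ =
        -(((r:ℝ) + 1) * ∫ t in (-1:ℝ)..1, (derivative^[j] (rodr n)).eval t * ((x - t) ^ (r + 1 + 1))⁻¹) := by
      rw [← intervalIntegral.integral_const_mul]
      simp only [mul_zero, sub_zero, zero_sub] at ibp
      have e2 : ∀ t, (derivative^[j+1] (rodr n)).eval t * ((x - t) ^ (r + 1))⁻¹ =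
        ((x - t) ^ (r + 1))⁻¹ * (derivative^[j+1] (rodr n)).eval t := fun t => mul_comm _ _
      simp only [e2]
      rw [ibp]
      congr 2; funext t; ring
    have := ih (by omega) (r + 1)
    rw [e1]
    rw [Nat.factorial_succ] at this
    push_cast at this
    rw [show r + (j + 1) = r + 1 + j by ring, pow_succ]
    linear_combination (-1) * this

lemma axis_integral (n m : ℕ) (hm : m ≤ n) (u : ℝ) (hu : 1 < u) :
    ∫ t in (-1:ℝ)..1, (1 - t ^ 2) ^ m * (pnm n m).eval t * ((u - t) ^ (2 * m + 1))⁻¹ =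
      2 * (-1) ^ m * (n + m).factorial / ((n - m).factorial * (2 * m).factorial) * iteratedDeriv m (legendreQ n) u := by
  rw [legendreQ_deriv n m u hu]
  have h1 := rodr_ibp n u hu n le_rfl m
  have h2 := rodr_ibp n u hu (n - m) (Nat.sub_le _ _) (2 * m)
  rw [show 2 * m + (n - m) = m + n by omega] at h2
  have f1 : ((n - m).factorial : ℝ) ≠ 0 := by positivity
  have e1 : ∀ t : ℝ, (1 - t ^ 2) ^ m * (pnm n m).eval t * ((u - t) ^ (2 * m + 1))⁻¹ =
      ((-1) ^ m * (1 / (2 ^ n * (n.factorial : ℝ))) * (n + m).factorial / (n - m).factorial) *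
        ((Polynomial.derivative^[n - m] (rodr n)).eval t * ((u - t) ^ (2 * m + 1))⁻¹) := by
    intro t
    have := rodr_flip n m hm t
    rw [pnm, Polynomial.eval_mul, Polynomial.eval_C]
    have e2 : (1 - t^2)^m = (-1)^m * (t^2-1)^m := by rw [← mul_pow]; congr 1; ring
    rw [e2]
    have e3 : (t^2-1)^m * (Polynomial.derivative^[n + m] (rodr n)).eval t =
        ((n + m).factorial : ℝ) * (Polynomial.derivative^[n - m] (rodr n)).eval t / (n - m).factorial := by
      rw [eq_div_iff f1]; linear_combination this
    linear_combination ((-1) ^ m * (1 / (2 ^ n * (n.factorial : ℝ))) * ((u - t) ^ (2 * m + 1))⁻¹) * e3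
  have e4 : ∀ t : ℝ, (pnm n 0).eval t * ((u - t) ^ (m + 1))⁻¹ =
      (1 / (2 ^ n * (n.factorial : ℝ))) * ((Polynomial.derivative^[n] (rodr n)).eval t * ((u - t) ^ (m + 1))⁻¹) := by
    intro t
    rw [pnm, Polynomial.eval_mul, Polynomial.eval_C, add_zero]; ring
  simp only [e1, e4, intervalIntegral.integral_const_mul]
  have f2 : ((2 * m).factorial : ℝ) ≠ 0 := by positivity
  have f3 : (m.factorial : ℝ) ≠ 0 := by positivity
  have sgn : (-1:ℝ) ^ n = (-1) ^ (n - m) * (-1) ^ m := by rw [← pow_add]; congr 1; omega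
  have sgn2 : (-1:ℝ) ^ m * (-1:ℝ) ^ m = 1 := by rw [← mul_pow]; simp
  generalize (∫ t in (-1:ℝ)..1, (Polynomial.derivative^[n] (rodr n)).eval t * ((u - t) ^ (m + 1))⁻¹) = A at *
  generalize (∫ t in (-1:ℝ)..1, (Polynomial.derivative^[n - m] (rodr n)).eval t * ((u - t) ^ (2 * m + 1))⁻¹) = B at *
  generalize (∫ t in (-1:ℝ)..1, (rodr n).eval t * ((u - t) ^ (m + n + 1))⁻¹) = D at *
  have key : (2 * m).factorial * B = (-1) ^ m * (m.factorial * A) := by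
    rw [h1, h2, sgn]
    linear_combination (-((-1) ^ (n-m) * ((m+n).factorial:ℝ) * D)) * sgn2
  have hB : B = (-1) ^ m * (m.factorial * A) / (2 * m).factorial := by
    rw [eq_div_iff f2]; linear_combination key
  rw [hB]
  field_simp

lemma cos_unique (n m : ℕ) (hm : m ≤ n) (f f' f'' : ℝ → ℝ)
    (hf : ∀ v ∈ Set.Icc (-1:ℝ) 1, HasDerivAt f (f' v) v)
    (hf' : ∀ v ∈ Set.Icc (-1:ℝ) 1, HasDerivAt f' (f'' v) v)
    (ode : ∀ v ∈ Set.Icc (-1:ℝ) 1, (1 - v ^ 2) * f'' v - 2 * (m + 1) * v * f' v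
      + ((n:ℝ) * (n + 1) - m * (m + 1)) * f v = 0) (v : ℝ) (hv : v ∈ Set.Ioo (-1:ℝ) 1) :
    f v = f 1 / (pnm n m).eval 1 * (pnm n m).eval v := by
  set c := f 1 / (pnm n m).eval 1 with hc
  have hp1 := (pnm_one_pos n m hm).ne'
  let g : ℝ → ℝ := fun v => f v - c * (pnm n m).eval v
  let g' : ℝ → ℝ := fun v => f' v - c * (pnm n (m+1)).eval v
  let g'' : ℝ → ℝ := fun v => f'' v - c * (pnm n (m+2)).eval v
  have pd : ∀ k v, HasDerivAt (fun v => (pnm n k).eval v) ((pnm n (k+1)).eval v) v := by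
    intro k v
    rw [← pnm_derivative]; exact Polynomial.hasDerivAt _ _
  have hg : ∀ v ∈ Set.Icc (-1:ℝ) 1, HasDerivAt g (g' v) v := fun v hv => (hf v hv).sub ((pd _ v).const_mul c)
  have hg' : ∀ v ∈ Set.Icc (-1:ℝ) 1, HasDerivAt g' (g'' v) v := fun v hv => (hf' v hv).sub ((pd _ v).const_mul c)
  have godE : ∀ v ∈ Set.Icc (-1:ℝ) 1, (1 - v ^ 2) * g'' v - 2 * (m + 1) * v * g' v
      + ((n:ℝ) * (n + 1) - m * (m + 1)) * g v = 0 := by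
    intro v hv
    simp only [g, g', g'']
    linear_combination ode v hv - c * pnm_ode n m v
  have hT := arccos_lt_pi.2 hv.1
  have hT0 := arccos_pos.2 hv.2
  set T := arccos v with hTdef
  have hsT := sin_pos_of_pos_of_lt_pi hT0 hT
  have := ode_unique T (2 * m + 1) (-((n:ℝ) * (n + 1) - m * (m + 1))) (|cos T| / sin T) (by positivity) sin cos
    (fun θ => g (cos θ)) (fun θ => g' (cos θ) * (-sin θ))
    (fun θ => g'' (cos θ) * (-sin θ) * (-sin θ) + g' (cos θ) * (-cos θ))
    (fun θ _ => (hg (cos θ) (cos_mem_Icc θ)).comp θ (hasDerivAt_cos θ))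
    (fun θ _ => ((hg' (cos θ) (cos_mem_Icc θ)).comp θ (hasDerivAt_cos θ)).mul (hasDerivAt_sin θ).neg)
    (by
      intro θ _
      have h := godE (cos θ) (cos_mem_Icc θ)
      have s2 : 1 - cos θ ^ 2 = sin θ ^ 2 := by rw [← sin_sq_add_cos_sq θ]; ring
      rw [s2] at h
      linear_combination sin θ * h)
    sin_zero (by simp) (fun θ hθ => sin_pos_of_pos_of_lt_pi hθ.1 (hθ.2.trans_lt hT))
    (by
      intro θ hθ
      have h1 : sin (T - θ) ≥ 0 := sin_nonneg_of_nonneg_of_le_pi (by linarith [hθ.2]) (by linarith [hθ.1])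
      rw [sin_sub] at h1
      have h2 := sin_pos_of_pos_of_lt_pi hθ.1 (hθ.2.trans_lt hT)
      rw [div_mul_eq_mul_div, le_div_iff₀ hsT]
      nlinarith [neg_abs_le (cos T)])
    (by positivity) (by simp only [g, cos_zero, hc]; field_simp; ring) T ⟨hT0.le, le_rfl⟩
  simp only [hTdef, cos_arccos hv.1.le hv.2.le] at this
  simp only [g] at this
  linarith

lemma focal_ode (n m : ℕ) (u : ℝ) (hu : 1 < u) :
    ∃ f' f'' : ℝ → ℝ,
    (∀ v ∈ Set.Icc (-1:ℝ) 1, HasDerivAt (fun v => ∫ t in (-1:ℝ)..1, (1 - t ^ 2) ^ m * (pnm n m).eval t *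
      (u ^ 2 + v ^ 2 + t ^ 2 - 1 - 2 * u * v * t) ^ (-(m:ℝ) - 1/2)) (f' v) v) ∧
    (∀ v ∈ Set.Icc (-1:ℝ) 1, HasDerivAt f' (f'' v) v) ∧
    (∀ v ∈ Set.Icc (-1:ℝ) 1, (1 - v ^ 2) * f'' v - 2 * (m + 1) * v * f' v
      + ((n:ℝ) * (n + 1) - m * (m + 1)) * (∫ t in (-1:ℝ)..1, (1 - t ^ 2) ^ m * (pnm n m).eval t *
      (u ^ 2 + v ^ 2 + t ^ 2 - 1 - 2 * u * v * t) ^ (-(m:ℝ) - 1/2)) = 0) := by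
  set q : ℝ := (m:ℝ) + 1/2 with hq
  have hq' : -(m:ℝ) - 1/2 = -q := by rw [hq]; ring
  rw [hq']
  let R : ℝ → ℝ → ℝ := fun v t => u ^ 2 + v ^ 2 + t ^ 2 - 1 - 2 * u * v * t
  let w : ℝ → ℝ := fun t => (1 - t ^ 2) ^ m * (pnm n m).eval t
  have hR : ∀ v ∈ Set.Ioo (-u) u, ∀ t ∈ Set.Icc (-1:ℝ) 1, 0 < R v t := by
    intro v hv t ht
    have e : R v t = (v - u * t) ^ 2 + (u ^ 2 - 1) * (1 - t ^ 2) := by simp only [R]; ring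
    rw [e]
    have h1 : 0 < u ^ 2 - 1 := by nlinarith
    rcases eq_or_lt_of_le ht.1 with h | h
    · rw [← h]; have : 0 < v - u * (-1) := by linarith [hv.1]
      have := pow_pos this 2
      linarith
    · rcases eq_or_lt_of_le ht.2 with h' | h'
      · rw [h']; have : 0 < u * 1 - v := by linarith [hv.2]
        have := pow_pos this 2
        nlinarith
      · have : 0 < 1 - t ^ 2 := by nlinarith
        positivity
  have hRd : ∀ v t, HasDerivAt (fun v => R v t) (2 * (v - u * t)) v := by
    intro v t
    simp only [R]
    have := ((((hasDerivAt_pow 2 v).const_add (u^2)).add_const (t^2)).sub_const 1).sub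
      (((hasDerivAt_id v).const_mul (2 * u)).mul_const t)
    refine this.congr_deriv ?_
    simp; ring
  have hRd' : ∀ v t, HasDerivAt (fun t => R v t) (2 * (t - u * v)) t := by
    intro v t
    simp only [R]
    have := (((hasDerivAt_pow 2 t).const_add (u^2 + v^2)).sub_const 1).sub
      ((hasDerivAt_id t).const_mul (2 * u * v))
    refine this.congr_deriv ?_
    simp; ring
  have hRc : ∀ r : ℝ, ContinuousOn (fun z : ℝ × ℝ => R z.1 z.2 ^ r) (Set.Ioo (-u) u ×ˢ Set.Icc (-1:ℝ) 1) := by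
    intro r
    refine ContinuousOn.rpow_const (by simp only [R]; fun_prop) fun z hz => Or.inl (hR _ hz.1 _ hz.2).ne'
  have hwc : ContinuousOn (fun z : ℝ × ℝ => w z.2) (Set.Ioo (-u) u ×ˢ Set.Icc (-1:ℝ) 1) := by
    simp only [w]; fun_prop
  let K1 : ℝ → ℝ → ℝ := fun v t => -q * (2 * (v - u * t)) * R v t ^ (-q - 1)
  let K2 : ℝ → ℝ → ℝ := fun v t => -q * (2 * R v t ^ (-q-1) + (2 * (v - u * t)) * ((2 * (v - u * t)) * (-q - 1) * R v t ^ (-q - 1 - 1)))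
  have hK0 : ∀ v ∈ Set.Ioo (-u) u, ∀ t ∈ Set.Icc (-1:ℝ) 1, HasDerivAt (fun v => w t * R v t ^ (-q)) (w t * K1 v t) v := by
    intro v hv t ht
    refine (((hRd v t).rpow_const (p := -q) (Or.inl (hR v hv t ht).ne')).const_mul (w t)).congr_deriv ?_
    simp only [K1]; ring
  have hK1 : ∀ v ∈ Set.Ioo (-u) u, ∀ t ∈ Set.Icc (-1:ℝ) 1, HasDerivAt (fun v => w t * K1 v t) (w t * K2 v t) v := by
    intro v hv t ht
    have h1 : HasDerivAt (fun v => -q * (2 * (v - u * t))) (-q * 2) v := by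
      refine ((((hasDerivAt_id v).sub_const (u * t)).const_mul 2).const_mul (-q)).congr_deriv ?_
      simp
    refine ((h1.mul ((hRd v t).rpow_const (p := -q - 1) (Or.inl (hR v hv t ht).ne'))).const_mul (w t)).congr_deriv ?_
    simp only [K2]; ring
  have hsub : Set.Icc (-1:ℝ) 1 ⊆ Set.Ioo (-u) u := fun v hv => ⟨by linarith [hv.1], by linarith [hv.2]⟩
  have c0 : ContinuousOn (fun z : ℝ × ℝ => w z.2 * R z.1 z.2 ^ (-q)) (Set.Ioo (-u) u ×ˢ Set.Icc (-1:ℝ) 1) :=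
    hwc.mul (hRc _)
  have c1 : ContinuousOn (fun z : ℝ × ℝ => w z.2 * K1 z.1 z.2) (Set.Ioo (-u) u ×ˢ Set.Icc (-1:ℝ) 1) := by
    refine hwc.mul (ContinuousOn.mul (by fun_prop) (hRc _))
  have c2 : ContinuousOn (fun z : ℝ × ℝ => w z.2 * K2 z.1 z.2) (Set.Ioo (-u) u ×ˢ Set.Icc (-1:ℝ) 1) := by
    refine hwc.mul (ContinuousOn.mul (by fun_prop) (ContinuousOn.add (ContinuousOn.mul (by fun_prop) (hRc _))
      (ContinuousOn.mul (by fun_prop) (ContinuousOn.mul (by fun_prop) (hRc _)))))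
  refine ⟨fun v => ∫ t in (-1:ℝ)..1, w t * K1 v t, fun v => ∫ t in (-1:ℝ)..1, w t * K2 v t, ?_, ?_, ?_⟩
  · intro v hv
    exact hasDerivAt_param1 (-1) 1 (by norm_num) (fun v t => w t * R v t ^ (-q)) (fun v t => w t * K1 v t) (-u) u
      c0 c1 hK0 v (hsub hv)
  · intro v hv
    exact hasDerivAt_param1 (-1) 1 (by norm_num) (fun v t => w t * K1 v t) (fun v t => w t * K2 v t) (-u) u
      c1 c2 hK1 v (hsub hv)
  · intro v hv
    have hv' := hsub hv
    have ii : ∀ G : ℝ → ℝ → ℝ, ContinuousOn (fun z : ℝ × ℝ => G z.1 z.2) (Set.Ioo (-u) u ×ˢ Set.Icc (-1:ℝ) 1) →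
        IntervalIntegrable (G v) volume (-1) 1 := by
      intro G hG
      refine ContinuousOn.intervalIntegrable ?_
      rw [Set.uIcc_of_le (by norm_num)]
      exact hG.comp (f := fun y => (v, y)) (by fun_prop) (fun y hy => ⟨hv', hy⟩)
    have i0 := ii (fun v t => w t * R v t ^ (-q)) c0
    have i1 := ii (fun v t => w t * K1 v t) c1
    have i2 := ii (fun v t => w t * K2 v t) c2
    have hcalc : ∫ t in (-1:ℝ)..1, ((1 - v ^ 2) * (w t * K2 v t) - 2 * (m + 1) * v * (w t * K1 v t)
      + ((n:ℝ) * (n + 1) - m * (m + 1)) * (w t * R v t ^ (-q))) = 0 := by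
      let Ψ : ℝ → ℝ := fun t => (1 - t ^ 2) ^ (m + 1) * ((pnm n m).eval t * (-q * (2 * (t - u * v)) * R v t ^ (-q-1))
        - R v t ^ (-q) * (pnm n (m+1)).eval t)
      have hΨ : ∀ t ∈ Set.uIcc (-1:ℝ) 1, HasDerivAt Ψ ((1 - v ^ 2) * (w t * K2 v t) - 2 * (m + 1) * v * (w t * K1 v t)
          + ((n:ℝ) * (n + 1) - m * (m + 1)) * (w t * R v t ^ (-q))) t := by
        intro t ht
        rw [Set.uIcc_of_le (by norm_num)] at ht
        have hp := hR v hv' t ht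
        have pd : ∀ k v, HasDerivAt (fun v => (pnm n k).eval v) ((pnm n (k+1)).eval v) v := by
          intro k v
          rw [← pnm_derivative]; exact Polynomial.hasDerivAt _ _
        have h1 : HasDerivAt (fun t => -q * (2 * (t - u * v))) (-q * 2) t := by
          refine ((((hasDerivAt_id t).sub_const (u * v)).const_mul 2).const_mul (-q)).congr_deriv ?_
          simp
        have h2 : HasDerivAt (fun t : ℝ => (1 - t ^ 2) ^ (m + 1)) (((m:ℝ)+1) * (1 - t^2)^m * (-(2 * t))) t := by
          refine (((hasDerivAt_pow 2 t).const_sub 1).pow (m+1)).congr_deriv ?_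
          simp
        have h3 := h2.mul (((pd m t).mul (h1.mul ((hRd' v t).rpow_const (p := -q-1) (Or.inl hp.ne')))).sub
          (((hRd' v t).rpow_const (p := -q) (Or.inl hp.ne')).mul (pd (m+1) t)))
        refine h3.congr_deriv ?_
        have r1 : R v t ^ (-q-1) = R v t ^ (-q-1-1) * R v t := by
          rw [← rpow_add_one hp.ne']; congr 1; ring
        have r0 : R v t ^ (-q) = R v t ^ (-q-1-1) * R v t * R v t := by
          rw [← r1, ← rpow_add_one hp.ne']; congr 1; ring
        simp only [K1, K2, w, Pi.mul_apply, Pi.sub_apply]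
        rw [r0, r1, pow_succ (1 - t^2)]
        have ode := pnm_ode n m t
        have hRdef : R v t = u ^ 2 + v ^ 2 + t ^ 2 - 1 - 2 * u * v * t := rfl
        generalize R v t ^ (-q-1-1) = κ at *
        generalize (1 - t^2)^m = W at *
        have e : (pnm n (m+1+1)) = pnm n (m+2) := rfl
        rw [e]
        generalize (pnm n m).eval t = p0 at *
        generalize (pnm n (m+1)).eval t = p1 at *
        generalize (pnm n (m+2)).eval t = p2 at *
        have hm' : (m:ℝ) = q - 1/2 := by rw [hq]; ring
        rw [hm'] at *
        rw [hRdef]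
        linear_combination (-(W * κ * (u ^ 2 + v ^ 2 + t ^ 2 - 1 - 2 * u * v * t)^2)) * ode
      rw [intervalIntegral.integral_eq_sub_of_hasDerivAt hΨ]
      · simp [Ψ]
      · exact ((i2.const_mul _).sub (i1.const_mul _)).add (i0.const_mul _)
    rw [← hcalc, intervalIntegral.integral_add ((i2.const_mul _).sub (i1.const_mul _)) (i0.const_mul _),
      intervalIntegral.integral_sub (i2.const_mul _) (i1.const_mul _), intervalIntegral.integral_const_mul,
      intervalIntegral.integral_const_mul, intervalIntegral.integral_const_mul]

lemma focal_integral (n m : ℕ) (hm : m ≤ n) (u : ℝ) (hu : 1 < u) (v : ℝ) (hv : v ∈ Set.Ioo (-1:ℝ) 1) :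
    ∫ t in (-1:ℝ)..1, (1 - t ^ 2) ^ m * (pnm n m).eval t *
      (u ^ 2 + v ^ 2 + t ^ 2 - 1 - 2 * u * v * t) ^ (-(m:ℝ) - 1/2) =
    2 * (-1) ^ m * (n + m).factorial / ((n - m).factorial * (2 * m).factorial) * iteratedDeriv m (legendreQ n) u
      / (pnm n m).eval 1 * (pnm n m).eval v := by
  obtain ⟨f', f'', h1, h2, h3⟩ := focal_ode n m u hu
  have := cos_unique n m hm _ f' f'' h1 h2 h3 v hv
  rw [this, ← axis_integral n m hm u hu]
  congr 2
  refine intervalIntegral.integral_congr fun t ht => ?_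
  rw [Set.uIcc_of_le (by norm_num)] at ht
  have hp : 0 < u - t := by linarith [ht.2]
  congr 1
  rw [show u ^ 2 + 1 ^ 2 + t ^ 2 - 1 - 2 * u * 1 * t = (u - t) ^ (2:ℝ) by rw [rpow_two]; ring,
    ← rpow_mul hp.le, ← rpow_natCast, ← rpow_neg hp.le]
  congr 1
  push_cast; ring

def Zf (ρ z η θ τ : ℝ) : ℝ :=
  ρ ^ 2 + sinh η ^ 2 * sin θ ^ 2 - 2 * ρ * sinh η * sin θ * cos τ + (z - cosh η * cos θ) ^ 2
def Ze (ρ z η θ τ : ℝ) : ℝ :=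
  2 * (cosh η * sin θ * (sinh η * sin θ - ρ * cos τ) - sinh η * cos θ * (z - cosh η * cos θ))
def Zt (ρ z η θ τ : ℝ) : ℝ :=
  2 * (sinh η * cos θ * (sinh η * sin θ - ρ * cos τ) + cosh η * sin θ * (z - cosh η * cos θ))
def Zee (ρ z η θ τ : ℝ) : ℝ :=
  2 * (cosh η ^ 2 + sinh η ^ 2) * sin θ ^ 2 - 2 * ρ * sinh η * sin θ * cos τ
    + 2 * sinh η ^ 2 * cos θ ^ 2 - 2 * (z - cosh η * cos θ) * cosh η * cos θ
def Ztt (ρ z η θ τ : ℝ) : ℝ :=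
  2 * sinh η ^ 2 * (cos θ ^ 2 - sin θ ^ 2) + 2 * ρ * sinh η * sin θ * cos τ
    + 2 * cosh η ^ 2 * sin θ ^ 2 + 2 * (z - cosh η * cos θ) * cosh η * cos θ

lemma Zf_eta (ρ z η θ τ : ℝ) : HasDerivAt (fun η => Zf ρ z η θ τ) (Ze ρ z η θ τ) η := by
  have h1 := Real.hasDerivAt_sinh η
  have h2 := Real.hasDerivAt_cosh η
  refine (((((h1.pow 2).mul_const (sin θ ^ 2)).const_add (ρ ^ 2)).sub
    (((h1.const_mul (2 * ρ)).mul_const (sin θ)).mul_const (cos τ))).add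
    (((h2.mul_const (cos θ)).const_sub z).pow 2)).congr_deriv ?_
  simp only [Ze]; push_cast; ring

lemma Ze_eta (ρ z η θ τ : ℝ) : HasDerivAt (fun η => Ze ρ z η θ τ) (Zee ρ z η θ τ) η := by
  have h1 := Real.hasDerivAt_sinh η
  have h2 := Real.hasDerivAt_cosh η
  refine ((((h2.mul_const (sin θ)).mul ((h1.mul_const (sin θ)).sub_const (ρ * cos τ))).sub
    ((h1.mul_const (cos θ)).mul ((h2.mul_const (cos θ)).const_sub z))).const_mul 2).congr_deriv ?_
  simp only [Zee]; ring

lemma Zf_theta (ρ z η θ τ : ℝ) : HasDerivAt (fun θ => Zf ρ z η θ τ) (Zt ρ z η θ τ) θ := by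
  have h1 := Real.hasDerivAt_sin θ
  have h2 := Real.hasDerivAt_cos θ
  refine (((((h1.pow 2).const_mul (sinh η ^ 2)).const_add (ρ ^ 2)).sub
    ((h1.const_mul (2 * ρ * sinh η)).mul_const (cos τ))).add
    (((h2.const_mul (cosh η)).const_sub z).pow 2)).congr_deriv ?_
  simp only [Zt]; push_cast; ring

lemma Zt_theta (ρ z η θ τ : ℝ) : HasDerivAt (fun θ => Zt ρ z η θ τ) (Ztt ρ z η θ τ) θ := by
  have h1 := Real.hasDerivAt_sin θ
  have h2 := Real.hasDerivAt_cos θ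
  refine ((((h2.const_mul (sinh η)).mul ((h1.const_mul (sinh η)).sub_const (ρ * cos τ))).add
    ((h1.const_mul (cosh η)).mul ((h2.const_mul (cosh η)).const_sub z))).const_mul 2).congr_deriv ?_
  simp only [Ztt]; ring

lemma Zf_tau (ρ z η θ τ : ℝ) : HasDerivAt (fun τ => Zf ρ z η θ τ) (2 * ρ * sinh η * sin θ * sin τ) τ := by
  have h2 := Real.hasDerivAt_cos τ
  refine (((h2.const_mul (2 * ρ * sinh η * sin θ)).const_sub (ρ ^ 2 + sinh η ^ 2 * sin θ ^ 2)).add_const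
    ((z - cosh η * cos θ) ^ 2)).congr_deriv ?_
  ring

lemma rpow_d1 {f : ℝ → ℝ} {f' x : ℝ} (r : ℝ) (hf : HasDerivAt f f' x) (h : 0 < f x) :
    HasDerivAt (fun x => f x ^ r) (r * f' * f x ^ (r - 1)) x := by
  refine (hf.rpow_const (p := r) (Or.inl h.ne')).congr_deriv ?_
  ring

lemma rpow_d2 {f f1 : ℝ → ℝ} {f' f'' x : ℝ} (r : ℝ) (hf : HasDerivAt f f' x) (hf1 : HasDerivAt f1 f'' x)
    (h : 0 < f x) (hx : f1 x = f') :
    HasDerivAt (fun x => r * f1 x * f x ^ (r - 1))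
      (r * f'' * f x ^ (r - 1) + r * (r - 1) * f' ^ 2 * f x ^ (r - 2)) x := by
  have := (hf1.const_mul r).mul (rpow_d1 (r - 1) hf h)
  refine this.congr_deriv ?_
  rw [hx, show r - 1 - 1 = r - 2 by ring]
  ring

lemma box_int (b c : ℝ) (hb : 0 ≤ b) (hc : 0 ≤ c) (F : ℝ → ℝ → ℝ)
    (hF : Continuous (fun y : ℝ × ℝ => F y.1 y.2)) :
    ∫ y in Set.Icc 0 b ×ˢ Set.Icc 0 c, F y.1 y.2 = ∫ θ in (0:ℝ)..b, ∫ τ in (0:ℝ)..c, F θ τ := by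
  have hi : IntegrableOn (fun y : ℝ × ℝ => F y.1 y.2) (Set.Icc 0 b ×ˢ Set.Icc 0 c) :=
    hF.continuousOn.integrableOn_compact (isCompact_Icc.prod isCompact_Icc)
  rw [Measure.volume_eq_prod] at *
  rw [setIntegral_prod _ hi]
  simp only [intervalIntegral.integral_of_le hb, intervalIntegral.integral_of_le hc,
    ← integral_Icc_eq_integral_Ioc]

lemma box_int' (b c : ℝ) (hb : 0 ≤ b) (hc : 0 ≤ c) (F : ℝ → ℝ → ℝ)
    (hF : Continuous (fun y : ℝ × ℝ => F y.1 y.2)) :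
    ∫ y in Set.Icc 0 b ×ˢ Set.Icc 0 c, F y.1 y.2 = ∫ τ in (0:ℝ)..c, ∫ θ in (0:ℝ)..b, F θ τ := by
  rw [← box_int c b hc hb (fun τ θ => F θ τ) (hF.comp continuous_swap)]
  rw [Measure.volume_eq_prod, ← setIntegral_prod_swap]
  rfl

lemma E_core (m q sh ch s c σ γ ρ z p p1 p2 l L S T : ℝ) (hq : q = m + 1 / 2)
    (h1 : ch ^ 2 = 1 + sh ^ 2) (h2 : c ^ 2 = 1 - s ^ 2) (h3 : γ ^ 2 = 1 - σ ^ 2)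
    (hode : (1 - c ^ 2) * p2 - 2 * (m + 1) * c * p1 + l * p = 0)
    (Z e t ee tt : ℝ)
    (hZ : Z = ρ ^ 2 + sh ^ 2 * s ^ 2 - 2 * ρ * sh * s * γ + (z - ch * c) ^ 2)
    (he : e = 2 * (ch * s * (sh * s - ρ * γ) - sh * c * (z - ch * c)))
    (ht : t = 2 * (sh * c * (sh * s - ρ * γ) + ch * s * (z - ch * c)))
    (hee : ee = 2 * (ch ^ 2 + sh ^ 2) * s ^ 2 - 2 * ρ * sh * s * γ
      + 2 * sh ^ 2 * c ^ 2 - 2 * (z - ch * c) * ch * c)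
    (htt : tt = 2 * sh ^ 2 * (c ^ 2 - s ^ 2) + 2 * ρ * sh * s * γ
      + 2 * ch ^ 2 * s ^ 2 + 2 * (z - ch * c) * ch * c) :
    (S * s * p * T) * (sh * (-q * ee * (L * Z) + -q * (-q - 1) * e ^ 2 * L)
      + (2 * m + 1) * ch * (-q * e * (L * Z)) - l * sh * (L * Z ^ 2))
    + sh * T * ((2 * m + 1) * S * c * (p * (-q * t * (L * Z)) + L * Z ^ 2 * s * p1)
      + S * s * (p * (-q * tt * (L * Z) + -q * (-q - 1) * t ^ 2 * L) + L * Z ^ 2 * (c * p1 - s ^ 2 * p2)))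
    + p * (-2 * q * ρ) * S * (sh ^ 2 + s ^ 2) * ((2 * m + 1) * T * γ * (L * Z)
      + T * σ ^ 2 * (-q - 1) * (2 * ρ * sh * s) * L) = 0 := by
  have i1 : e ^ 2 + t ^ 2 + 4 * ρ ^ 2 * σ ^ 2 * (sh ^ 2 + s ^ 2) = 4 * (sh ^ 2 + s ^ 2) * Z := by
    have hs : σ ^ 2 = 1 - γ ^ 2 := by linarith
    have e1 : e ^ 2 + t ^ 2 = 4 * (ch ^ 2 * s ^ 2 + sh ^ 2 * c ^ 2) * ((sh * s - ρ * γ) ^ 2 + (z - ch * c) ^ 2) := by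
      rw [he, ht]; ring
    have e2 : Z = (sh * s - ρ * γ) ^ 2 + (z - ch * c) ^ 2 + ρ ^ 2 * (1 - γ ^ 2) := by rw [hZ]; ring
    rw [e1, e2, hs, h1, h2]; ring
  have i2 : ee + tt = 4 * (sh ^ 2 + s ^ 2) := by
    rw [hee, htt]
    linear_combination (4 * s ^ 2) * h1 + (4 * sh ^ 2) * h2
  have i3 : s * ch * e + sh * c * t = 2 * (s ^ 2 + sh ^ 2) * (sh * s - ρ * γ) := by
    rw [he, ht]
    linear_combination (2 * s ^ 2 * (sh * s - ρ * γ)) * h1 + (2 * sh ^ 2 * (sh * s - ρ * γ)) * h2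
  have hc : c ^ 2 = 1 - s ^ 2 := h2
  rw [hc] at hode
  have hm : m = q - 1 / 2 := by linarith
  subst hm
  clear hZ he ht hee htt h1 h2 h3 hc
  linear_combination (S * T * q * (q + 1) * L * sh * s * p) * i1 - (S * T * q * L * Z * sh * s * p) * i2
    - (S * T * 2 * q * q * L * Z * p) * i3 - (S * T * L * Z ^ 2 * sh * s) * hode

def boxS : Set (ℝ × ℝ) := Set.Icc 0 π ×ˢ Set.Icc 0 (2 * π)

lemma boxS_compact : IsCompact boxS := isCompact_Icc.prod isCompact_Icc
lemma boxS_meas : MeasurableSet boxS := measurableSet_Icc.prod measurableSet_Icc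

/-- differentiate twice an integral of a weight times a power of `Zf`. -/
lemma Zint_deriv (ρ z H r : ℝ) (hZ : ∀ η ∈ Set.Ioo (-H) H, ∀ θ τ, 0 < Zf ρ z η θ τ)
    (w : ℝ × ℝ → ℝ) (hw : Continuous w) (η : ℝ) (hη : η ∈ Set.Ioo (-H) H) :
    HasDerivAt (fun η => ∫ y in boxS, w y * Zf ρ z η y.1 y.2 ^ r)
      (∫ y in boxS, w y * (r * Ze ρ z η y.1 y.2 * Zf ρ z η y.1 y.2 ^ (r - 1))) η := by
  have hK : ∀ r : ℝ, ContinuousOn (fun q : ℝ × (ℝ × ℝ) => Zf ρ z q.1 q.2.1 q.2.2 ^ r)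
      (Set.Ioo (-H) H ×ˢ boxS) := by
    intro r
    refine ContinuousOn.rpow_const (by unfold Zf; fun_prop) fun q hq => Or.inl (hZ _ hq.1 _ _).ne'
  refine hasDerivAt_param volume boxS boxS_compact boxS_meas (fun η y => w y * Zf ρ z η y.1 y.2 ^ r)
    (fun η y => w y * (r * Ze ρ z η y.1 y.2 * Zf ρ z η y.1 y.2 ^ (r - 1))) (-H) H ?_ ?_ ?_ η hη
  · exact ContinuousOn.mul (by fun_prop) (hK r)
  · exact ContinuousOn.mul (by fun_prop) (ContinuousOn.mul (by unfold Ze; fun_prop) (hK _))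
  · intro x hx y _
    exact (rpow_d1 r (Zf_eta ρ z x y.1 y.2) (hZ x hx _ _)).const_mul _

lemma Zint_deriv2 (ρ z H r : ℝ) (hZ : ∀ η ∈ Set.Ioo (-H) H, ∀ θ τ, 0 < Zf ρ z η θ τ)
    (w : ℝ × ℝ → ℝ) (hw : Continuous w) (η : ℝ) (hη : η ∈ Set.Ioo (-H) H) :
    HasDerivAt (fun η => ∫ y in boxS, w y * (r * Ze ρ z η y.1 y.2 * Zf ρ z η y.1 y.2 ^ (r - 1)))
      (∫ y in boxS, w y * (r * Zee ρ z η y.1 y.2 * Zf ρ z η y.1 y.2 ^ (r - 1)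
        + r * (r - 1) * Ze ρ z η y.1 y.2 ^ 2 * Zf ρ z η y.1 y.2 ^ (r - 2))) η := by
  have hK : ∀ r : ℝ, ContinuousOn (fun q : ℝ × (ℝ × ℝ) => Zf ρ z q.1 q.2.1 q.2.2 ^ r)
      (Set.Ioo (-H) H ×ˢ boxS) := by
    intro r
    refine ContinuousOn.rpow_const (by unfold Zf; fun_prop) fun q hq => Or.inl (hZ _ hq.1 _ _).ne'
  refine hasDerivAt_param volume boxS boxS_compact boxS_meas
    (fun η y => w y * (r * Ze ρ z η y.1 y.2 * Zf ρ z η y.1 y.2 ^ (r - 1)))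
    (fun η y => w y * (r * Zee ρ z η y.1 y.2 * Zf ρ z η y.1 y.2 ^ (r - 1)
        + r * (r - 1) * Ze ρ z η y.1 y.2 ^ 2 * Zf ρ z η y.1 y.2 ^ (r - 2))) (-H) H ?_ ?_ ?_ η hη
  · exact ContinuousOn.mul (by fun_prop) (ContinuousOn.mul (by unfold Ze; fun_prop) (hK _))
  · exact ContinuousOn.mul (by fun_prop) ((ContinuousOn.mul (by unfold Zee; fun_prop) (hK _)).add
      (ContinuousOn.mul (by unfold Ze; fun_prop) (hK _)))
  · intro x hx y _
    exact (rpow_d2 r (Zf_eta ρ z x y.1 y.2) (Ze_eta ρ z x y.1 y.2) (hZ x hx _ _) rfl).const_mul _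

lemma int4 (A B : ℝ) (f g h k : ℝ × ℝ → ℝ) (hf : Continuous f) (hg : Continuous g)
    (hh : Continuous h) (hk : Continuous k) :
    ∫ y in boxS, (A * f y + B * g y + h y + k y) =
      A * (∫ y in boxS, f y) + B * (∫ y in boxS, g y) + (∫ y in boxS, h y) + ∫ y in boxS, k y := by
  have int : ∀ F : ℝ × ℝ → ℝ, Continuous F → Integrable F (volume.restrict boxS) := fun F hF =>
    hF.continuousOn.integrableOn_compact boxS_compact
  rw [integral_add (int _ (by fun_prop)) (int _ hk), integral_add (int _ (by fun_prop)) (int _ hh),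
    integral_add (int _ (by fun_prop)) (int _ (by fun_prop)), integral_const_mul, integral_const_mul]

def wE (n m : ℕ) (y : ℝ × ℝ) : ℝ :=
  sin y.1 ^ (2 * m) * sin y.1 * (pnm n m).eval (cos y.1) * sin y.2 ^ (2 * m)

lemma wE_cont (n m : ℕ) : Continuous (wE n m) := by unfold wE; fun_prop

lemma E_ode (n m : ℕ) (ρ z η : ℝ) (hZ : ∀ θ τ, 0 < Zf ρ z η θ τ) (r : ℝ) (hr : r = -((m:ℝ) + 1 / 2)) :
    sinh η * (∫ y in boxS, wE n m y * (r * Zee ρ z η y.1 y.2 * Zf ρ z η y.1 y.2 ^ (r - 1)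
        + r * (r - 1) * Ze ρ z η y.1 y.2 ^ 2 * Zf ρ z η y.1 y.2 ^ (r - 2)))
      + (2 * m + 1) * cosh η * (∫ y in boxS, wE n m y * (r * Ze ρ z η y.1 y.2 * Zf ρ z η y.1 y.2 ^ (r - 1)))
    = ((n:ℝ) * (n + 1) - m * (m + 1)) * sinh η * ∫ y in boxS, wE n m y * Zf ρ z η y.1 y.2 ^ r := by
  have hK : ∀ r : ℝ, Continuous (fun y : ℝ × ℝ => Zf ρ z η y.1 y.2 ^ r) := by
    intro r
    exact Continuous.rpow_const (by unfold Zf; fun_prop) fun q => Or.inl (hZ _ _).ne'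
  have hwc := wE_cont n m
  have cE : Continuous (fun y : ℝ × ℝ => Ze ρ z η y.1 y.2) := by unfold Ze; fun_prop
  have cEE : Continuous (fun y : ℝ × ℝ => Zee ρ z η y.1 y.2) := by unfold Zee; fun_prop
  have cT : Continuous (fun y : ℝ × ℝ => Zt ρ z η y.1 y.2) := by unfold Zt; fun_prop
  have cTT : Continuous (fun y : ℝ × ℝ => Ztt ρ z η y.1 y.2) := by unfold Ztt; fun_prop
  -- the theta divergence term
  let fa : ℝ → ℝ → ℝ := fun θ τ => sinh η * sin τ ^ (2 * m) *
    ((2 * m + 1) * sin θ ^ (2 * m) * cos θ * ((pnm n m).eval (cos θ) *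
        (r * Zt ρ z η θ τ * Zf ρ z η θ τ ^ (r - 1)) + Zf ρ z η θ τ ^ r * sin θ * (pnm n (m + 1)).eval (cos θ))
      + sin θ ^ (2 * m) * sin θ * ((pnm n m).eval (cos θ) *
          (r * Ztt ρ z η θ τ * Zf ρ z η θ τ ^ (r - 1) + r * (r - 1) * Zt ρ z η θ τ ^ 2 * Zf ρ z η θ τ ^ (r - 2))
        + Zf ρ z η θ τ ^ r * (cos θ * (pnm n (m + 1)).eval (cos θ) - sin θ ^ 2 * (pnm n (m + 2)).eval (cos θ))))
  let fb : ℝ → ℝ → ℝ := fun θ τ => (pnm n m).eval (cos θ) * (2 * r * ρ) * sin θ ^ (2 * m) *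
    (sinh η ^ 2 + sin θ ^ 2) * ((2 * m + 1) * sin τ ^ (2 * m) * cos τ * Zf ρ z η θ τ ^ (r - 1)
      + sin τ ^ (2 * m) * sin τ ^ 2 * (r - 1) * (2 * ρ * sinh η * sin θ) * Zf ρ z η θ τ ^ (r - 2))
  have ca : Continuous (fun y : ℝ × ℝ => fa y.1 y.2) := by
    have k0 := hK r
    have k1 := hK (r - 1)
    have k2 := hK (r - 2)
    have hp : ∀ k, Continuous (fun y : ℝ × ℝ => (pnm n k).eval (cos y.1)) := fun k => by fun_prop
    have hs : Continuous (fun y : ℝ × ℝ => sin y.1) := by fun_prop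
    have hc : Continuous (fun y : ℝ × ℝ => cos y.1) := by fun_prop
    refine Continuous.mul (by fun_prop) (Continuous.add ?_ ?_)
    · exact Continuous.mul (by fun_prop) (((hp m).mul ((continuous_const.mul cT).mul k1)).add
        ((k0.mul hs).mul (hp _)))
    · exact Continuous.mul (by fun_prop) (((hp m).mul (((continuous_const.mul cTT).mul k1).add
        ((continuous_const.mul (cT.pow 2)).mul k2))).add
        (k0.mul ((hc.mul (hp _)).sub ((hs.pow 2).mul (hp _)))))
  have cb : Continuous (fun y : ℝ × ℝ => fb y.1 y.2) := by
    have k1 := hK (r - 1)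
    have k2 := hK (r - 2)
    exact Continuous.mul (by fun_prop) (Continuous.add (Continuous.mul (by fun_prop) k1)
      (Continuous.mul (by fun_prop) k2))
  have Ia : ∫ y in boxS, fa y.1 y.2 = 0 := by
    rw [boxS, box_int' π (2 * π) pi_pos.le (by positivity) fa ca]
    suffices hz : ∀ τ, ∫ θ in (0:ℝ)..π, fa θ τ = 0 by simp only [hz, intervalIntegral.integral_zero]
    intro τ
    have hd : ∀ θ ∈ Set.uIcc 0 π, HasDerivAt (fun θ => sinh η * sin τ ^ (2 * m) * (sin θ ^ (2 * m + 1) *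
        ((pnm n m).eval (cos θ) * (r * Zt ρ z η θ τ * Zf ρ z η θ τ ^ (r - 1))
          + Zf ρ z η θ τ ^ r * sin θ * (pnm n (m + 1)).eval (cos θ)))) (fa θ τ) θ := by
      intro θ _
      have h1 := Real.hasDerivAt_sin θ
      have h2 := Real.hasDerivAt_cos θ
      have hp : ∀ k, HasDerivAt (fun θ => (pnm n k).eval (cos θ)) ((pnm n (k + 1)).eval (cos θ) * -sin θ) θ := by
        intro k
        have := (pnm n k).hasDerivAt (cos θ)
        rw [pnm_derivative] at this
        exact this.comp θ h2
      have k0 := rpow_d1 r (Zf_theta ρ z η θ τ) (hZ θ τ)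
      have k1 := rpow_d2 r (Zf_theta ρ z η θ τ) (Zt_theta ρ z η θ τ) (hZ θ τ) rfl
      refine (((h1.pow (2 * m + 1)).mul (((hp m).mul k1).add ((k0.mul h1).mul (hp (m + 1))))).const_mul
        (sinh η * sin τ ^ (2 * m))).congr_deriv ?_
      simp only [fa, Pi.pow_apply, Pi.mul_apply, Pi.add_apply, Nat.add_sub_cancel, pow_succ (sin θ) (2 * m)]
      push_cast
      ring
    have := intervalIntegral.integral_eq_sub_of_hasDerivAt hd
      ((ca.comp (by fun_prop : Continuous fun θ : ℝ => (θ, τ))).intervalIntegrable _ _)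
    simpa using this
  have Ib : ∫ y in boxS, fb y.1 y.2 = 0 := by
    rw [boxS, box_int π (2 * π) pi_pos.le (by positivity) fb cb]
    suffices hz : ∀ θ, ∫ τ in (0:ℝ)..(2 * π), fb θ τ = 0 by simp only [hz, intervalIntegral.integral_zero]
    intro θ
    have hd : ∀ τ ∈ Set.uIcc 0 (2 * π), HasDerivAt (fun τ => (pnm n m).eval (cos θ) * (2 * r * ρ) * sin θ ^ (2 * m) *
       (sinh η ^ 2 + sin θ ^ 2) * (sin τ ^ (2 * m + 1) * Zf ρ z η θ τ ^ (r - 1))) (fb θ τ) τ := by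
      intro τ _
      have h1 := Real.hasDerivAt_sin τ
      have k1 := rpow_d1 (r - 1) (Zf_tau ρ z η θ τ) (hZ θ τ)
      refine (((h1.pow (2 * m + 1)).mul k1).const_mul _).congr_deriv ?_
      simp only [fb, Pi.pow_apply, Nat.add_sub_cancel, pow_succ (sin τ) (2 * m), show r - 1 - 1 = r - 2 by ring]
      push_cast
      ring
    have := intervalIntegral.integral_eq_sub_of_hasDerivAt hd
      ((cb.comp (by fun_prop : Continuous fun τ : ℝ => (θ, τ))).intervalIntegrable _ _)
    simpa using this
  have k0 := hK r
  have k1 := hK (r - 1)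
  have k2 := hK (r - 2)
  have c2 : Continuous (fun y : ℝ × ℝ => wE n m y * (r * Zee ρ z η y.1 y.2 * Zf ρ z η y.1 y.2 ^ (r - 1)
        + r * (r - 1) * Ze ρ z η y.1 y.2 ^ 2 * Zf ρ z η y.1 y.2 ^ (r - 2))) :=
    hwc.mul (((continuous_const.mul cEE).mul k1).add ((continuous_const.mul (cE.pow 2)).mul k2))
  have c1 : Continuous (fun y : ℝ × ℝ => wE n m y * (r * Ze ρ z η y.1 y.2 * Zf ρ z η y.1 y.2 ^ (r - 1))) :=
    hwc.mul ((continuous_const.mul cE).mul k1)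
  have c0 : Continuous (fun y : ℝ × ℝ => wE n m y * Zf ρ z η y.1 y.2 ^ r) := hwc.mul k0
  have key : ∀ y : ℝ × ℝ, sinh η * (wE n m y * (r * Zee ρ z η y.1 y.2 * Zf ρ z η y.1 y.2 ^ (r - 1)
        + r * (r - 1) * Ze ρ z η y.1 y.2 ^ 2 * Zf ρ z η y.1 y.2 ^ (r - 2)))
      + (2 * m + 1) * cosh η * (wE n m y * (r * Ze ρ z η y.1 y.2 * Zf ρ z η y.1 y.2 ^ (r - 1)))
      + fa y.1 y.2 + fb y.1 y.2
      = ((n:ℝ) * (n + 1) - m * (m + 1)) * sinh η * (wE n m y * Zf ρ z η y.1 y.2 ^ r) := by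
    rintro ⟨θ, τ⟩
    have hpos := hZ θ τ
    have e1 : Zf ρ z η θ τ ^ (r - 1) = Zf ρ z η θ τ ^ (r - 2) * Zf ρ z η θ τ := by
      rw [← Real.rpow_add_one hpos.ne']; congr 1; ring
    have e0 : Zf ρ z η θ τ ^ r = Zf ρ z η θ τ ^ (r - 2) * Zf ρ z η θ τ ^ 2 := by
      rw [← Real.rpow_add_natCast hpos.ne']; congr 1; push_cast; ring
    have := E_core m (-r) (sinh η) (cosh η) (sin θ) (cos θ) (sin τ) (cos τ) ρ z ((pnm n m).eval (cos θ))
      ((pnm n (m + 1)).eval (cos θ)) ((pnm n (m + 2)).eval (cos θ)) ((n:ℝ) * (n + 1) - m * (m + 1))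
      (Zf ρ z η θ τ ^ (r - 2)) (sin θ ^ (2 * m)) (sin τ ^ (2 * m)) (by rw [hr]; ring)
      (by rw [Real.cosh_sq]; ring) (Real.cos_sq' θ) (Real.cos_sq' τ) (pnm_ode n m (cos θ))
      (Zf ρ z η θ τ) (Ze ρ z η θ τ) (Zt ρ z η θ τ) (Zee ρ z η θ τ) (Ztt ρ z η θ τ) rfl rfl rfl rfl rfl
    simp only [fa, fb, wE, e1, e0]
    linear_combination this
  have fin : ∫ y in boxS, (sinh η * (wE n m y * (r * Zee ρ z η y.1 y.2 * Zf ρ z η y.1 y.2 ^ (r - 1)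
        + r * (r - 1) * Ze ρ z η y.1 y.2 ^ 2 * Zf ρ z η y.1 y.2 ^ (r - 2)))
      + (2 * m + 1) * cosh η * (wE n m y * (r * Ze ρ z η y.1 y.2 * Zf ρ z η y.1 y.2 ^ (r - 1)))
      + fa y.1 y.2 + fb y.1 y.2)
      = ∫ y in boxS, ((n:ℝ) * (n + 1) - m * (m + 1)) * sinh η * (wE n m y * Zf ρ z η y.1 y.2 ^ r) :=
    integral_congr_ae (Filter.Eventually.of_forall key)
  rw [int4 _ _ _ _ _ _ c2 c1 ca cb, Ia, Ib, integral_const_mul, add_zero, add_zero] at fin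
  exact fin

lemma Zf_pos (u v ρ z η θ τ : ℝ) (hρ : ρ ^ 2 = (u ^ 2 - 1) * (1 - v ^ 2)) (hz : z = u * v)
    (hv : v ∈ Set.Ioo (-1:ℝ) 1) (hη : cosh η < u) : 0 < Zf ρ z η θ τ := by
  have hC := Real.one_le_cosh η
  have hch := Real.cosh_sq η
  have h1 := Real.sin_sq_add_cos_sq θ
  have h2 := Real.sin_sq_add_cos_sq τ
  have hV : v ^ 2 < 1 := by nlinarith [hv.1, hv.2]
  have e : Zf ρ z η θ τ = (sinh η * sin θ - ρ * cos τ) ^ 2 + (z - cosh η * cos θ) ^ 2 + (ρ * sin τ) ^ 2 := by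
    unfold Zf
    linear_combination (-ρ ^ 2) * h2
  rw [e]
  by_contra hcon
  have a1 : (sinh η * sin θ - ρ * cos τ) ^ 2 = 0 := by nlinarith [sq_nonneg (sinh η * sin θ - ρ * cos τ), sq_nonneg (z - cosh η * cos θ), sq_nonneg (ρ * sin τ)]
  have a2 : (z - cosh η * cos θ) ^ 2 = 0 := by nlinarith [sq_nonneg (sinh η * sin θ - ρ * cos τ), sq_nonneg (z - cosh η * cos θ), sq_nonneg (ρ * sin τ)]
  have a3 : (ρ * sin τ) ^ 2 = 0 := by nlinarith [sq_nonneg (sinh η * sin θ - ρ * cos τ), sq_nonneg (z - cosh η * cos θ), sq_nonneg (ρ * sin τ)]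
  rw [sq_eq_zero_iff, sub_eq_zero] at a1 a2
  have b1 : (u ^ 2 - 1) * (1 - v ^ 2) = (cosh η ^ 2 - 1) * sin θ ^ 2 := by
    rw [← hρ, hch]
    have : (ρ * cos τ) ^ 2 = (sinh η * sin θ) ^ 2 := by rw [a1]
    linear_combination this + a3 - ρ ^ 2 * h2
  have b2 : u ^ 2 * v ^ 2 = cosh η ^ 2 * (1 - sin θ ^ 2) := by
    have : z ^ 2 = (cosh η * cos θ) ^ 2 := by rw [a2]
    rw [hz] at this
    linear_combination this + cosh η ^ 2 * h1
  have hX : cosh η ^ 2 < u ^ 2 := by nlinarith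
  have hC2 : 1 ≤ cosh η ^ 2 := by nlinarith
  have c1 : 0 < (cosh η ^ 2 - 1) * (sin θ ^ 2 - (1 - v ^ 2)) := by
    have : 0 < (u ^ 2 - cosh η ^ 2) * (1 - v ^ 2) := mul_pos (by linarith) (by linarith)
    nlinarith
  have c2 : 0 ≤ cosh η ^ 2 * (1 - sin θ ^ 2 - v ^ 2) := by
    have : 0 ≤ (u ^ 2 - cosh η ^ 2) * v ^ 2 := mul_nonneg (by linarith) (by positivity)
    nlinarith
  have c3 : 0 < sin θ ^ 2 - (1 - v ^ 2) := by
    by_contra hh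
    push Not at hh
    nlinarith [mul_nonneg (sub_nonneg.2 hC2) (neg_nonneg.2 hh)]
  have c4 : 0 ≤ 1 - sin θ ^ 2 - v ^ 2 := by
    by_contra hh
    push Not at hh
    nlinarith
  linarith

lemma int_sin_cos (g : ℝ → ℝ) (hg : Continuous g) :
    ∫ θ in (0:ℝ)..π, sin θ * g (cos θ) = ∫ t in (-1:ℝ)..1, g t := by
  have := intervalIntegral.integral_comp_mul_deriv (a := 0) (b := π) (f := cos) (f' := fun x => -sin x) (g := g)
    (fun x _ => Real.hasDerivAt_cos x) (by fun_prop) hg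
  simp only [cos_zero, cos_pi, Function.comp] at this
  rw [intervalIntegral.integral_symm 1 (-1), ← this, ← intervalIntegral.integral_neg]
  refine intervalIntegral.integral_congr fun θ _ => ?_
  ring

lemma sin_even (m : ℕ) : ∫ τ in (0:ℝ)..(2 * π), sin τ ^ (2 * m) =
    2 * π * (2 * m).factorial / (4 ^ m * (m.factorial : ℝ) ^ 2) := by
  induction m with
  | zero => simp
  | succ k ih =>
    rw [show 2 * (k + 1) = 2 * k + 2 by ring, integral_sin_pow, ih]
    simp only [sin_zero, sin_two_pi, Nat.factorial_succ]
    have := Nat.factorial_ne_zero k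
    push_cast
    field_simp
    ring

lemma E_sol (n m : ℕ) (hm : m ≤ n) (ρ z H : ℝ) (hZ : ∀ η ∈ Set.Ioo (-H) H, ∀ θ τ, 0 < Zf ρ z η θ τ)
    (r : ℝ) (hr : r = -((m:ℝ) + 1 / 2)) (η : ℝ) (h0 : 0 ≤ η) (hH : η < H) :
    ∫ y in boxS, wE n m y * Zf ρ z η y.1 y.2 ^ r =
      (∫ y in boxS, wE n m y * Zf ρ z 0 y.1 y.2 ^ r) / (pnm n m).eval 1 * (pnm n m).eval (cosh η) := by
  have hp1 := pnm_one_pos n m hm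
  set C := (∫ y in boxS, wE n m y * Zf ρ z 0 y.1 y.2 ^ r) / (pnm n m).eval 1 with hC
  have hp : ∀ k x, HasDerivAt (fun x => (pnm n k).eval (cosh x)) ((pnm n (k + 1)).eval (cosh x) * sinh x) x := by
    intro k x
    have := (pnm n k).hasDerivAt (cosh x)
    rw [pnm_derivative] at this
    exact this.comp x (Real.hasDerivAt_cosh x)
  have hsub : ∀ x ∈ Set.Icc 0 η, x ∈ Set.Ioo (-H) H := fun x hx => ⟨by linarith [hx.1], by linarith [hx.2]⟩
  have main := ode_unique η (2 * m + 1) ((n:ℝ) * (n + 1) - m * (m + 1)) 0 (by positivity) sinh cosh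
    (fun η => (∫ y in boxS, wE n m y * Zf ρ z η y.1 y.2 ^ r) - C * (pnm n m).eval (cosh η))
    (fun η => (∫ y in boxS, wE n m y * (r * Ze ρ z η y.1 y.2 * Zf ρ z η y.1 y.2 ^ (r - 1)))
      - C * ((pnm n (m + 1)).eval (cosh η) * sinh η))
    (fun η => (∫ y in boxS, wE n m y * (r * Zee ρ z η y.1 y.2 * Zf ρ z η y.1 y.2 ^ (r - 1)
        + r * (r - 1) * Ze ρ z η y.1 y.2 ^ 2 * Zf ρ z η y.1 y.2 ^ (r - 2)))
      - C * ((pnm n (m + 2)).eval (cosh η) * sinh η * sinh η + (pnm n (m + 1)).eval (cosh η) * cosh η))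
    (fun x hx => (Zint_deriv ρ z H r hZ _ (wE_cont n m) x (hsub x hx)).sub ((hp m x).const_mul C))
    (fun x hx => (Zint_deriv2 ρ z H r hZ _ (wE_cont n m) x (hsub x hx)).sub
      (((hp (m + 1) x).mul (Real.hasDerivAt_sinh x)).const_mul C))
    (by
      intro x hx
      have h1 := E_ode n m ρ z x (hZ x (hsub x hx)) r hr
      have h2 := pnm_ode n m (cosh x)
      have h3 := Real.cosh_sq x
      rw [show (1:ℝ) - cosh x ^ 2 = - sinh x ^ 2 by rw [h3]; ring] at h2
      linear_combination h1 + C * sinh x * h2)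
    Real.sinh_zero (by simp) (fun x hx => Real.sinh_pos_iff.2 hx.1)
    (fun x hx => by nlinarith [Real.cosh_pos x]) le_rfl
    (by rw [hC, Real.cosh_zero]; field_simp; simp) η ⟨h0, le_rfl⟩
  linarith

lemma E_zero (n m : ℕ) (hm : m ≤ n) (u v ρ z : ℝ) (hu : 1 < u) (hρ : ρ ^ 2 = (u ^ 2 - 1) * (1 - v ^ 2)) (hz : z = u * v)
    (hv : v ∈ Set.Ioo (-1:ℝ) 1) (r : ℝ) (hr : r = -((m:ℝ) + 1 / 2)) :
    ∫ y in boxS, wE n m y * Zf ρ z 0 y.1 y.2 ^ r =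
      (2 * π * (2 * m).factorial / (4 ^ m * (m.factorial : ℝ) ^ 2)) *
      (2 * (-1) ^ m * (n + m).factorial / ((n - m).factorial * (2 * m).factorial) *
        iteratedDeriv m (legendreQ n) u / (pnm n m).eval 1 * (pnm n m).eval v) := by
  have hpos : ∀ t : ℝ, 0 < ρ ^ 2 + (z - t) ^ 2 := by
    intro t
    have : 0 < ρ ^ 2 := by rw [hρ]; exact mul_pos (by nlinarith) (by nlinarith [hv.1, hv.2])
    positivity
  have hZ0 : ∀ θ τ, Zf ρ z 0 θ τ = ρ ^ 2 + (z - cos θ) ^ 2 := by intro θ τ; simp [Zf]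
  have hK : Continuous (fun t : ℝ => (ρ ^ 2 + (z - t) ^ 2) ^ r) :=
    Continuous.rpow_const (by fun_prop) fun t => Or.inl (hpos t).ne'
  have hKc : Continuous (fun y : ℝ × ℝ => (ρ ^ 2 + (z - cos y.1) ^ 2) ^ r) :=
    hK.comp (by fun_prop : Continuous fun y : ℝ × ℝ => cos y.1)
  simp only [hZ0]
  rw [boxS, box_int π (2 * π) pi_pos.le (by positivity) (fun θ τ => wE n m (θ, τ) * (ρ ^ 2 + (z - cos θ) ^ 2) ^ r)
    ((wE_cont n m).mul hKc)]
  rw [← focal_integral n m hm u hu v hv]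
  have e1 : ∀ θ, ∫ τ in (0:ℝ)..(2 * π), wE n m (θ, τ) * (ρ ^ 2 + (z - cos θ) ^ 2) ^ r =
      (2 * π * (2 * m).factorial / (4 ^ m * (m.factorial : ℝ) ^ 2)) *
      (sin θ * ((1 - cos θ ^ 2) ^ m * (pnm n m).eval (cos θ) * (ρ ^ 2 + (z - cos θ) ^ 2) ^ r)) := by
    intro θ
    rw [← sin_even, ← intervalIntegral.integral_mul_const]
    refine intervalIntegral.integral_congr fun τ _ => ?_
    simp only [wE]
    rw [← Real.sin_sq, ← pow_mul]
    ring
  simp only [e1]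
  rw [intervalIntegral.integral_const_mul]
  congr 1
  rw [int_sin_cos (fun t => (1 - t ^ 2) ^ m * (pnm n m).eval t * (ρ ^ 2 + (z - t) ^ 2) ^ r)
    (Continuous.mul (by fun_prop) hK)]
  refine intervalIntegral.integral_congr fun t _ => ?_
  rw [hρ, hz, hr]
  congr 2 <;> ring

lemma E_eval (n m : ℕ) (hm : m ≤ n) (u v ρ z : ℝ) (hu : 1 < u) (hρ : ρ ^ 2 = (u ^ 2 - 1) * (1 - v ^ 2)) (hz : z = u * v)
    (hv : v ∈ Set.Ioo (-1:ℝ) 1) (η : ℝ) (h0 : 0 ≤ η) (hH : η < arcosh u) :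
    ∫ y in boxS, wE n m y * Zf ρ z η y.1 y.2 ^ (-((m:ℝ) + 1 / 2)) =
      4 * π * (-1) ^ m * (n - m).factorial / (n + m).factorial * (pnm n m).eval (cosh η) * (pnm n m).eval v *
        iteratedDeriv m (legendreQ n) u := by
  rw [E_sol n m hm ρ z (arcosh u) ?_ _ rfl η h0 hH, E_zero n m hm u v ρ z hu hρ hz hv _ rfl, pnm_one n m hm]
  · have := Nat.factorial_ne_zero m
    have := Nat.factorial_ne_zero (2 * m)
    have := Nat.factorial_ne_zero (n + m)
    have := Nat.factorial_ne_zero (n - m)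
    rw [show (4:ℝ) ^ m = 2 ^ m * 2 ^ m by rw [← mul_pow]; norm_num]
    field_simp
    ring
  · intro x hx θ τ
    refine Zf_pos u v ρ z x θ τ hρ hz hv ?_
    have := Real.cosh_lt_cosh.2 (show |x| < |arcosh u| by
      rw [abs_of_pos (arcosh_pos hu)]; exact abs_lt.2 hx)
    rwa [cosh_arcosh hu.le] at this

def wB (n m : ℕ) (y : ℝ × ℝ) : ℝ :=
  cos (m * y.2) * (sin y.1 ^ m * sin y.1 * (pnm n m).eval (cos y.1))

lemma wB_cont (n m : ℕ) : Continuous (wB n m) := by unfold wB; fun_prop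

lemma Zf_pos' (u v ρ z : ℝ) (hu : 1 < u) (hρ : ρ ^ 2 = (u ^ 2 - 1) * (1 - v ^ 2)) (hz : z = u * v)
    (hv : v ∈ Set.Ioo (-1:ℝ) 1) : ∀ η ∈ Set.Ioo (-arcosh u) (arcosh u), ∀ θ τ, 0 < Zf ρ z η θ τ := by
  intro x hx θ τ
  refine Zf_pos u v ρ z x θ τ hρ hz hv ?_
  have := Real.cosh_lt_cosh.2 (show |x| < |arcosh u| by
    rw [abs_of_pos (arcosh_pos hu)]; exact abs_lt.2 hx)
  rwa [cosh_arcosh hu.le] at this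

lemma Zf_contK (ρ z η : ℝ) (hZ : ∀ θ τ, 0 < Zf ρ z η θ τ) (r : ℝ) :
    Continuous (fun y : ℝ × ℝ => Zf ρ z η y.1 y.2 ^ r) :=
  Continuous.rpow_const (by unfold Zf; fun_prop) fun q => Or.inl (hZ _ _).ne'

lemma B_eval (n m : ℕ) (hm : m ≤ n) (u v ρ z : ℝ) (hu : 1 < u) (hρ : ρ ^ 2 = (u ^ 2 - 1) * (1 - v ^ 2)) (hz : z = u * v)
    (hv : v ∈ Set.Ioo (-1:ℝ) 1) (η : ℝ) (h0 : 0 ≤ η) (hH : η < arcosh u) :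
    ∫ y in boxS, wB n m y * Zf ρ z η y.1 y.2 ^ (-(1 / 2) : ℝ) =
      ρ ^ m * sinh η ^ m * (4 * π * (-1) ^ m * (n - m).factorial / (n + m).factorial * (pnm n m).eval (cosh η) * (pnm n m).eval v *
        iteratedDeriv m (legendreQ n) u) := by
  have hZ := Zf_pos' u v ρ z hu hρ hz hv η ⟨by linarith [arcosh_pos hu], hH⟩
  rw [← E_eval n m hm u v ρ z hu hρ hz hv η h0 hH]
  rw [boxS, box_int π (2 * π) pi_pos.le (by positivity) (fun θ τ => wB n m (θ, τ) * Zf ρ z η θ τ ^ (-(1 / 2) : ℝ))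
    ((wB_cont n m).mul (Zf_contK ρ z η hZ _)),
    box_int π (2 * π) pi_pos.le (by positivity) (fun θ τ => wE n m (θ, τ) * Zf ρ z η θ τ ^ (-((m:ℝ) + 1 / 2)))
    ((wE_cont n m).mul (Zf_contK ρ z η hZ _)), ← intervalIntegral.integral_const_mul]
  refine intervalIntegral.integral_congr fun θ _ => ?_
  have e : ∀ τ, Zf ρ z η θ τ = (ρ ^ 2 + sinh η ^ 2 * sin θ ^ 2 + (z - cosh η * cos θ) ^ 2)
      - 2 * (ρ * sinh η * sin θ) * cos τ := by intro τ; unfold Zf; ring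
  have hc := cos_lift m (ρ ^ 2 + sinh η ^ 2 * sin θ ^ 2 + (z - cosh η * cos θ) ^ 2) (ρ * sinh η * sin θ)
    (fun τ => by rw [← e]; exact hZ θ τ)
  simp only [← e] at hc
  have l1 : ∫ τ in (0:ℝ)..(2 * π), wB n m (θ, τ) * Zf ρ z η θ τ ^ (-(1 / 2) : ℝ) =
      (sin θ ^ m * sin θ * (pnm n m).eval (cos θ)) *
        ∫ τ in (0:ℝ)..(2 * π), cos (m * τ) * Zf ρ z η θ τ ^ (-(1 / 2) : ℝ) := by
    rw [← intervalIntegral.integral_const_mul]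
    refine intervalIntegral.integral_congr fun τ _ => ?_
    simp only [wB]; ring
  have l2 : ∫ τ in (0:ℝ)..(2 * π), wE n m (θ, τ) * Zf ρ z η θ τ ^ (-((m:ℝ) + 1 / 2)) =
      (sin θ ^ (2 * m) * sin θ * (pnm n m).eval (cos θ)) *
        ∫ τ in (0:ℝ)..(2 * π), sin τ ^ (2 * m) * Zf ρ z η θ τ ^ (-(m:ℝ) - 1 / 2) := by
    rw [← intervalIntegral.integral_const_mul]
    refine intervalIntegral.integral_congr fun τ _ => ?_
    simp only [wE]
    rw [show -((m:ℝ) + 1 / 2) = -(m:ℝ) - 1 / 2 by ring]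
    ring
  simp only [l1, l2, hc]
  ring

lemma assocP_cosh (n m : ℕ) (η : ℝ) (h : 0 ≤ η) :
    assocP n m (cosh η) = sinh η ^ m * (pnm n m).eval (cosh η) := by
  rw [assocP, iteratedDeriv_legendreP, Real.cosh_sq, add_sub_cancel_right,
    Real.sqrt_sq (Real.sinh_nonneg_iff.2 h)]

lemma assocP_diff (n m : ℕ) (x : ℝ) (hx : 1 < x) : DifferentiableAt ℝ (assocP n m) x := by
  unfold assocP
  rw [iteratedDeriv_legendreP]
  have h : x ^ 2 - 1 ≠ 0 := by nlinarith
  refine DifferentiableAt.mul (DifferentiableAt.pow (DifferentiableAt.sqrt (f := fun x => x ^ 2 - 1) (by fun_prop) h) m)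
    (Polynomial.differentiable _ x)

lemma B_deriv (n m : ℕ) (hm : m ≤ n) (u₀ u v : ℝ) (hu₀ : 1 < u₀) (hu : u₀ < u)
    (hv : v ∈ Set.Ioo (-1:ℝ) 1) :
    ∫ y in boxS, wB n m y * (-(1 / 2) * Ze (√(u ^ 2 - 1) * √(1 - v ^ 2)) (u * v) (arcosh u₀) y.1 y.2 *
        Zf (√(u ^ 2 - 1) * √(1 - v ^ 2)) (u * v) (arcosh u₀) y.1 y.2 ^ (-(1 / 2) - 1 : ℝ)) =
      4 * π * (-1) ^ m * (n - m).factorial / (n + m).factorial * ferrersP n m v * assocQ n m u *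
        (deriv (assocP n m) u₀ * √(u₀ ^ 2 - 1)) := by
  have hu1 : 1 < u := hu₀.trans hu
  have hv2 : 0 < 1 - v ^ 2 := by nlinarith [hv.1, hv.2]
  have hρ : (√(u ^ 2 - 1) * √(1 - v ^ 2)) ^ 2 = (u ^ 2 - 1) * (1 - v ^ 2) := by
    rw [mul_pow, Real.sq_sqrt (by nlinarith), Real.sq_sqrt hv2.le]
  have hZ := Zf_pos' u v _ _ hu1 hρ rfl hv
  have hη0 : 0 < arcosh u₀ := arcosh_pos hu₀
  have hη1 : arcosh u₀ < arcosh u := (arcosh_lt_arcosh (by linarith) (by linarith)).2 hu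
  have d1 := Zint_deriv _ _ (arcosh u) (-(1 / 2)) hZ (wB n m) (wB_cont n m) (arcosh u₀) ⟨by linarith, hη1⟩
  have d2 : HasDerivAt (fun η => 4 * π * (-1) ^ m * (n - m).factorial / (n + m).factorial * ferrersP n m v * assocQ n m u *
      assocP n m (cosh η)) (4 * π * (-1) ^ m * (n - m).factorial / (n + m).factorial * ferrersP n m v * assocQ n m u *
        (deriv (assocP n m) u₀ * √(u₀ ^ 2 - 1))) (arcosh u₀) := by
    refine HasDerivAt.const_mul _ ?_
    have h1 := Real.hasDerivAt_cosh (arcosh u₀)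
    rw [sinh_arcosh hu₀.le] at h1
    have h2 := (assocP_diff n m u₀ hu₀).hasDerivAt
    rw [← cosh_arcosh hu₀.le] at h2
    have h3 := h2.comp (arcosh u₀) h1
    rw [cosh_arcosh hu₀.le] at h3
    exact h3
  refine d1.unique (d2.congr_of_eventuallyEq ?_)
  filter_upwards [isOpen_Ioo.mem_nhds (⟨hη0, hη1⟩ : arcosh u₀ ∈ Set.Ioo 0 (arcosh u))] with η hη
  rw [B_eval n m hm u v _ _ hu1 hρ rfl hv η hη.1.le hη.2, assocP_cosh n m η hη.1.le]
  simp only [assocQ, ferrersP, iteratedDeriv_legendreP, mul_pow]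
  ring

lemma four_shift (m : ℕ) (φ : ℝ) (G : ℝ → ℝ) (hG : Continuous G) (hp : ∀ t, G (t + 2 * π) = G t)
    (he : ∀ t, G (2 * π - t) = G t) :
    ∫ t in (0:ℝ)..(2 * π), (G (t - φ) : ℂ) * Complex.exp (Complex.I * m * t) =
      Complex.exp (Complex.I * m * φ) * ((∫ t in (0:ℝ)..(2 * π), cos (m * t) * G t : ℝ) : ℂ) := by
  have s1 : ∫ t in (0:ℝ)..(2 * π), (G (t - φ) : ℂ) * Complex.exp (Complex.I * m * t) =
      ∫ t in (0:ℝ)..(2 * π), (fun τ : ℝ => (G τ : ℂ) * Complex.exp (Complex.I * m * (τ + φ : ℝ))) (t - φ) := by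
    refine intervalIntegral.integral_congr fun t _ => ?_
    simp
  have per : Function.Periodic (fun τ : ℝ => (G τ : ℂ) * Complex.exp (Complex.I * m * (τ + φ : ℝ))) (2 * π) := by
    intro τ
    simp only [hp]
    congr 1
    rw [Complex.exp_eq_exp_iff_exists_int]
    refine ⟨m, ?_⟩
    push_cast
    ring
  rw [s1, intervalIntegral.integral_comp_sub_right (fun τ : ℝ => (G τ : ℂ) * Complex.exp (Complex.I * m * (τ + φ : ℝ)))]
  have s2 := per.intervalIntegral_add_eq (0 - φ) 0
  rw [show 0 - φ + 2 * π = 2 * π - φ by ring, zero_add] at s2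
  rw [s2]
  have hs : ∫ t in (0:ℝ)..(2 * π), sin (m * t) * G t = 0 := by
    have h := intervalIntegral.integral_comp_sub_left (a := 0) (b := 2 * π) (fun t => sin (m * t) * G t) (2 * π)
    simp only [sub_self, sub_zero, he] at h
    have h2 : ∀ t, sin (m * (2 * π - t)) = - sin (m * t) := by
      intro t
      rw [mul_sub, Real.sin_nat_mul_two_pi_sub]
    simp only [h2, neg_mul, intervalIntegral.integral_neg] at h
    linarith
  have s3 : ∀ t : ℝ, (G t : ℂ) * Complex.exp (Complex.I * m * (t + φ : ℝ)) =
      Complex.exp (Complex.I * m * φ) * (((cos (m * t) * G t : ℝ) : ℂ) + ((sin (m * t) * G t : ℝ) : ℂ) * Complex.I) := by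
    intro t
    have : Complex.I * m * (t + φ : ℝ) = Complex.I * m * φ + ((m * t : ℝ) : ℂ) * Complex.I := by push_cast; ring
    rw [this, Complex.exp_add, Complex.exp_mul_I]
    push_cast
    ring
  simp only [s3]
  rw [intervalIntegral.integral_const_mul, intervalIntegral.integral_add, intervalIntegral.integral_mul_const,
    intervalIntegral.integral_ofReal, intervalIntegral.integral_ofReal, hs]
  · simp
  · exact Continuous.intervalIntegrable (by fun_prop) _ _
  · exact Continuous.intervalIntegrable (by fun_prop) _ _

lemma deriv_prolate (a u₀ s t : ℝ) (hu₀ : 1 < u₀) : deriv (fun w => prolate a w s t) u₀ =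
    (WithLp.equiv 2 (Fin 3 → ℝ)).symm
    ![a * (u₀ / √(u₀ ^ 2 - 1)) * √(1 - s ^ 2) * cos t, a * (u₀ / √(u₀ ^ 2 - 1)) * √(1 - s ^ 2) * sin t, a * s] := by
  refine HasDerivAt.deriv ?_
  have hne : u₀ ^ 2 - 1 ≠ 0 := by nlinarith
  have hs : HasDerivAt (fun w : ℝ => √(w ^ 2 - 1)) (u₀ / √(u₀ ^ 2 - 1)) u₀ := by
    have h1 : HasDerivAt (fun w : ℝ => w ^ 2 - 1) (2 * u₀) u₀ := by
      refine ((hasDerivAt_pow 2 u₀).sub_const 1).congr_deriv ?_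
      norm_num
    refine (h1.sqrt hne).congr_deriv ?_
    rw [mul_div_mul_left _ _ two_ne_zero]
  have hpi : HasDerivAt (fun w => ![a * √(w ^ 2 - 1) * √(1 - s ^ 2) * cos t, a * √(w ^ 2 - 1) * √(1 - s ^ 2) * sin t,
      a * w * s]) (![a * (u₀ / √(u₀ ^ 2 - 1)) * √(1 - s ^ 2) * cos t, a * (u₀ / √(u₀ ^ 2 - 1)) * √(1 - s ^ 2) * sin t, a * s]) u₀ := by
    rw [hasDerivAt_pi]
    intro i
    fin_cases i
    · exact ((hs.const_mul a).mul_const _).mul_const _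
    · exact ((hs.const_mul a).mul_const _).mul_const _
    · refine (((hasDerivAt_id u₀).const_mul a).mul_const s).congr_deriv ?_
      simp
  exact (PiLp.continuousLinearEquiv 2 ℝ (fun _ : Fin 3 => ℝ)).symm.hasFDerivAt.comp_hasDerivAt u₀ hpi


lemma kernel_eq (a : ℝ) (ha : 0 < a) (u₀ u v φ θ t : ℝ) (hu₀ : 1 < u₀) (hu : u₀ < u) (hv : v ∈ Set.Ioo (-1:ℝ) 1)
    (hθ : θ ∈ Set.Icc 0 π) :
    (inner ℝ (unitNormalP a u₀ (cos θ) t) (prolate a u v φ - prolate a u₀ (cos θ) t) : ℝ) /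
        (4 * π * ‖prolate a u v φ - prolate a u₀ (cos θ) t‖ ^ 3) * areaElemP a u₀ (cos θ) =
      √(u₀ ^ 2 - 1) / (4 * π) *
      (-(1 / 2) * Ze (√(u ^ 2 - 1) * √(1 - v ^ 2)) (u * v) (arcosh u₀) θ (t - φ) *
        Zf (√(u ^ 2 - 1) * √(1 - v ^ 2)) (u * v) (arcosh u₀) θ (t - φ) ^ (-(1 / 2) - 1 : ℝ)) := by
  have hu1 : 1 < u := hu₀.trans hu
  have hv2 : 0 < 1 - v ^ 2 := by nlinarith [hv.1, hv.2]
  have hρ : (√(u ^ 2 - 1) * √(1 - v ^ 2)) ^ 2 = (u ^ 2 - 1) * (1 - v ^ 2) := by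
    rw [mul_pow, Real.sq_sqrt (by nlinarith), Real.sq_sqrt hv2.le]
  have hη0 : 0 < arcosh u₀ := arcosh_pos hu₀
  have hη1 : arcosh u₀ < arcosh u := (arcosh_lt_arcosh (by linarith) (by linarith)).2 hu
  have hZ := Zf_pos' u v _ _ hu1 hρ rfl hv (arcosh u₀) ⟨by linarith, hη1⟩ θ (t - φ)
  have hσ : √(1 - cos θ ^ 2) = sin θ := by
    rw [← Real.sin_sq, Real.sqrt_sq (Real.sin_nonneg_of_mem_Icc hθ)]
  have hsq := Real.sin_sq_add_cos_sq θ
  have hb2 : 0 < u₀ ^ 2 - 1 := by nlinarith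
  have hb : 0 < √(u₀ ^ 2 - 1) := Real.sqrt_pos.2 hb2
  have hbb : √(u₀ ^ 2 - 1) ^ 2 = u₀ ^ 2 - 1 := Real.sq_sqrt hb2.le
  have hw2 : 0 < u₀ ^ 2 - cos θ ^ 2 := by nlinarith [sq_nonneg (sin θ)]
  have hw : 0 < √(u₀ ^ 2 - cos θ ^ 2) := Real.sqrt_pos.2 hw2
  have hww : √(u₀ ^ 2 - cos θ ^ 2) ^ 2 = u₀ ^ 2 - cos θ ^ 2 := Real.sq_sqrt hw2.le
  have hct := Real.cos_sub t φ
  have ht := Real.sin_sq_add_cos_sq t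
  have hφ := Real.sin_sq_add_cos_sq φ
  rw [unitNormalP, deriv_prolate a u₀ _ t hu₀, inner_smul_left]
  simp only [conj_trivial, areaElemP]
  -- norm of derivative
  have n1 : ‖(WithLp.equiv 2 (Fin 3 → ℝ)).symm
    ![a * (u₀ / √(u₀ ^ 2 - 1)) * √(1 - cos θ ^ 2) * cos t, a * (u₀ / √(u₀ ^ 2 - 1)) * √(1 - cos θ ^ 2) * sin t, a * cos θ]‖
      = a * √(u₀ ^ 2 - cos θ ^ 2) / √(u₀ ^ 2 - 1) := by
    rw [EuclideanSpace.norm_eq, Real.sqrt_eq_iff_mul_self_eq (by positivity) (by positivity)]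
    simp only [Fin.sum_univ_three, WithLp.equiv_symm_apply, Matrix.cons_val_zero, Matrix.cons_val_one,
      Matrix.cons_val, Real.norm_eq_abs, sq_abs, hσ]
    generalize √(u₀ ^ 2 - 1) = b at *
    generalize √(u₀ ^ 2 - cos θ ^ 2) = W at *
    have e1 : (a * (u₀ / b) * sin θ * cos t) ^ 2 + (a * (u₀ / b) * sin θ * sin t) ^ 2 + (a * cos θ) ^ 2
        = a ^ 2 * (u₀ ^ 2 * sin θ ^ 2 + cos θ ^ 2 * b ^ 2) / b ^ 2 := by
      field_simp
      linear_combination (u₀ ^ 2 * sin θ ^ 2) * ht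
    have e2 : a * W / b * (a * W / b) = a ^ 2 * W ^ 2 / b ^ 2 := by ring
    rw [e1, e2, hww, hbb]
    congr 2
    linear_combination u₀ ^ 2 * hsq
  have n2 : ‖prolate a u v φ - prolate a u₀ (cos θ) t‖ = a *
      √(Zf (√(u ^ 2 - 1) * √(1 - v ^ 2)) (u * v) (arcosh u₀) θ (t - φ)) := by
    rw [EuclideanSpace.norm_eq, Real.sqrt_eq_iff_mul_self_eq (by positivity) (by positivity)]
    simp only [prolate, Fin.sum_univ_three, WithLp.equiv_symm_apply, PiLp.sub_apply, Matrix.cons_val_zero, Matrix.cons_val_one,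
      Matrix.cons_val, Real.norm_eq_abs, sq_abs, hσ]
    rw [mul_mul_mul_comm a, Real.mul_self_sqrt hZ.le]
    simp only [Zf, cosh_arcosh hu₀.le, sinh_arcosh hu₀.le, hct]
    generalize √(u₀ ^ 2 - 1) = b at *
    generalize √(u ^ 2 - 1) = x at *
    generalize √(1 - v ^ 2) = y at *
    linear_combination a ^ 2 * x ^ 2 * y ^ 2 * hφ + a ^ 2 * b ^ 2 * sin θ ^ 2 * ht
  have n3 : inner ℝ ((WithLp.equiv 2 (Fin 3 → ℝ)).symm
    ![a * (u₀ / √(u₀ ^ 2 - 1)) * √(1 - cos θ ^ 2) * cos t, a * (u₀ / √(u₀ ^ 2 - 1)) * √(1 - cos θ ^ 2) * sin t, a * cos θ])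
      (prolate a u v φ - prolate a u₀ (cos θ) t) = - a ^ 2 / (2 * √(u₀ ^ 2 - 1)) *
      Ze (√(u ^ 2 - 1) * √(1 - v ^ 2)) (u * v) (arcosh u₀) θ (t - φ) := by
    simp only [prolate, PiLp.inner_apply, Fin.sum_univ_three, WithLp.equiv_symm_apply, PiLp.sub_apply, Matrix.cons_val_zero, Matrix.cons_val_one,
      Matrix.cons_val, hσ]
    have ri : ∀ x y : ℝ, inner ℝ x y = y * x := fun x y => rfl
    simp only [ri, Ze, cosh_arcosh hu₀.le, sinh_arcosh hu₀.le, hct]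
    generalize √(u₀ ^ 2 - 1) = b at *
    generalize √(u ^ 2 - 1) = x at *
    generalize √(1 - v ^ 2) = y at *
    field_simp
    linear_combination (-u₀ * sin θ ^ 2 * b) * ht
  have e3 : Zf (√(u ^ 2 - 1) * √(1 - v ^ 2)) (u * v) (arcosh u₀) θ (t - φ) ^ (-(1 / 2) - 1 : ℝ) =
      (√(Zf (√(u ^ 2 - 1) * √(1 - v ^ 2)) (u * v) (arcosh u₀) θ (t - φ)) ^ 3)⁻¹ := by
    generalize Zf (√(u ^ 2 - 1) * √(1 - v ^ 2)) (u * v) (arcosh u₀) θ (t - φ) = Z at *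
    rw [Real.sqrt_eq_rpow, ← Real.rpow_mul_natCast hZ.le, ← Real.rpow_neg hZ.le]
    norm_num
  rw [n1, n2, n3, e3]
  have hq : 0 < √(Zf (√(u ^ 2 - 1) * √(1 - v ^ 2)) (u * v) (arcosh u₀) θ (t - φ)) := Real.sqrt_pos.2 hZ
  generalize √(Zf (√(u ^ 2 - 1) * √(1 - v ^ 2)) (u * v) (arcosh u₀) θ (t - φ)) = Q at *
  generalize Ze (√(u ^ 2 - 1) * √(1 - v ^ 2)) (u * v) (arcosh u₀) θ (t - φ) = e at *
  generalize √(u₀ ^ 2 - 1) = b at *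
  generalize √(u₀ ^ 2 - cos θ ^ 2) = W at *
  have := pi_pos
  field_simp
  try ring

theorem doubleLayer_exterior_eval (a : ℝ) (ha : 0 < a) (u₀ : ℝ) (hu₀ : 1 < u₀)
    (n m : ℕ) (hm : m ≤ n) (u v φ : ℝ) (hu : u₀ < u) (hv : v ∈ Set.Ioo (-1 : ℝ) 1) :
    doubleLayerP a u₀ (fun s t => sphY n m s t) (prolate a u v φ) =
      (((((n - m).factorial : ℝ) / ((n + m).factorial : ℝ)) * (-1 : ℝ) ^ m * (u₀ ^ 2 - 1) *
          deriv (assocP n m) u₀ * assocQ n m u : ℝ) : ℂ) * sphY n m v φ := by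
  have hu1 : 1 < u := hu₀.trans hu
  have hv2 : 0 < 1 - v ^ 2 := by nlinarith [hv.1, hv.2]
  have hρ : (√(u ^ 2 - 1) * √(1 - v ^ 2)) ^ 2 = (u ^ 2 - 1) * (1 - v ^ 2) := by
    rw [mul_pow, Real.sq_sqrt (by nlinarith), Real.sq_sqrt hv2.le]
  have hη0 : 0 < arcosh u₀ := arcosh_pos hu₀
  have hη1 : arcosh u₀ < arcosh u := (arcosh_lt_arcosh (by linarith) (by linarith)).2 hu
  have hZ := Zf_pos' u v _ _ hu1 hρ rfl hv (arcosh u₀) ⟨by linarith, hη1⟩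
  have hBd := B_deriv n m hm u₀ u v hu₀ hu hv
  have hker := fun θ t hθ => kernel_eq a ha u₀ u v φ θ t hu₀ hu hv hθ
  have hbb : √(u₀ ^ 2 - 1) * √(u₀ ^ 2 - 1) = u₀ ^ 2 - 1 := Real.mul_self_sqrt (by nlinarith)
  set b := √(u₀ ^ 2 - 1) with hbdef
  let k : ℝ → ℝ → ℝ := fun θ τ =>
    -(1 / 2) * Ze (√(u ^ 2 - 1) * √(1 - v ^ 2)) (u * v) (arcosh u₀) θ τ *
        Zf (√(u ^ 2 - 1) * √(1 - v ^ 2)) (u * v) (arcosh u₀) θ τ ^ (-(1 / 2) - 1 : ℝ)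
  have hk : Continuous (fun y : ℝ × ℝ => k y.1 y.2) :=
    Continuous.mul (by unfold Ze; fun_prop) (Zf_contK _ _ _ hZ _)
  have kper : ∀ θ τ, k θ (τ + 2 * π) = k θ τ := by intro θ τ; simp [k, Ze, Zf]
  have keven : ∀ θ τ, k θ (2 * π - τ) = k θ τ := by intro θ τ; simp [k, Ze, Zf]
  let N : ℝ := √((2 * (n : ℝ) + 1) / (4 * π)) * √(((n - m).factorial : ℝ) / ((n + m).factorial : ℝ))
  let h : ℝ → ℝ → ℝ := fun θ τ => N * (sin θ ^ m * (pnm n m).eval (cos θ)) * (b / (4 * π) * k θ τ)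
  have hh : Continuous (fun y : ℝ × ℝ => h y.1 y.2) :=
    Continuous.mul (by fun_prop) (hk.const_mul _)
  have h_def : ∀ θ τ, h θ τ = N * (sin θ ^ m * (pnm n m).eval (cos θ)) * (b / (4 * π) * k θ τ) := fun _ _ => rfl
  have k_def : ∀ θ τ, k θ τ = -(1 / 2) * Ze (√(u ^ 2 - 1) * √(1 - v ^ 2)) (u * v) (arcosh u₀) θ τ *
        Zf (√(u ^ 2 - 1) * √(1 - v ^ 2)) (u * v) (arcosh u₀) θ τ ^ (-(1 / 2) - 1 : ℝ) := fun _ _ => rfl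
  have N_def : N = √((2 * (n : ℝ) + 1) / (4 * π)) * √(((n - m).factorial : ℝ) / ((n + m).factorial : ℝ)) := rfl
  clear_value h k N
  let G : ℝ → ℝ := fun τ => ∫ θ in (0:ℝ)..π, sin θ * h θ τ
  have hG : Continuous G := by
    refine intervalIntegral.continuous_parametric_intervalIntegral_of_continuous' (f := fun τ θ => sin θ * h θ τ) ?_ 0 π
    have c0 : Continuous (fun y : ℝ × ℝ => h y.2 y.1) := hh.comp (continuous_snd.prodMk continuous_fst)
    have c1 : Continuous (fun y : ℝ × ℝ => sin y.2) := by fun_prop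
    exact c1.mul c0
  have inner_eq : ∀ t : ℝ, ∫ s in (-1 : ℝ)..1,
      ((((inner ℝ (unitNormalP a u₀ s t) (prolate a u v φ - prolate a u₀ s t) : ℝ) /
        (4 * Real.pi * ‖prolate a u v φ - prolate a u₀ s t‖ ^ 3)) * areaElemP a u₀ s : ℝ) : ℂ) * sphY n m s t
      = (G (t - φ) : ℂ) * Complex.exp (Complex.I * m * t) := by
    intro t
    have e1 : ∀ s ∈ Set.uIcc (-1:ℝ) 1,
      ((((inner ℝ (unitNormalP a u₀ s t) (prolate a u v φ - prolate a u₀ s t) : ℝ) /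
        (4 * Real.pi * ‖prolate a u v φ - prolate a u₀ s t‖ ^ 3)) * areaElemP a u₀ s : ℝ) : ℂ) * sphY n m s t
      = ((h (arccos s) (t - φ) : ℝ) : ℂ) * Complex.exp (Complex.I * m * t) := by
      intro s hs
      rw [Set.uIcc_of_le (by norm_num)] at hs
      have hc := Real.cos_arccos hs.1 hs.2
      have hq := hker (arccos s) t ⟨arccos_nonneg s, arccos_le_pi s⟩
      rw [hc] at hq
      rw [hq, sphY, ← mul_assoc, ← Complex.ofReal_mul]
      congr 2
      simp only [h_def, ferrersP, iteratedDeriv_legendreP, N_def, k_def, hc, Real.sin_arccos]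
      ring
    rw [intervalIntegral.integral_congr e1, intervalIntegral.integral_mul_const, intervalIntegral.integral_ofReal]
    congr 2
    rw [← int_sin_cos (fun s => h (arccos s) (t - φ))
      (hh.comp (by fun_prop : Continuous fun s => (arccos s, t - φ)))]
    refine intervalIntegral.integral_congr fun θ hθ => ?_
    rw [Set.uIcc_of_le pi_pos.le] at hθ
    simp only [Real.arccos_cos hθ.1 hθ.2]
  rw [doubleLayerP]
  simp only [inner_eq]
  rw [four_shift m φ G hG (fun t => by simp only [G, h_def, kper]) (fun t => by simp only [G, h_def, keven])]
  have fin : ∫ t in (0:ℝ)..(2 * π), cos (m * t) * G t = N * (b / (4 * π)) *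
      ∫ y in boxS, wB n m y * k y.1 y.2 := by
    rw [boxS, box_int' π (2 * π) pi_pos.le (by positivity) (fun θ τ => wB n m (θ, τ) * k θ τ)
      ((wB_cont n m).mul hk), ← intervalIntegral.integral_const_mul]
    refine intervalIntegral.integral_congr fun τ _ => ?_
    simp only [G]
    rw [← intervalIntegral.integral_const_mul, ← intervalIntegral.integral_const_mul]
    refine intervalIntegral.integral_congr fun θ _ => ?_
    simp only [h_def, wB]
    ring
  rw [fin]
  simp only [k_def, hBd]
  rw [sphY, ← N_def, mul_comm (Complex.exp _)]
  have key : N * (b / (4 * π)) * (4 * π * (-1) ^ m * (n - m).factorial / (n + m).factorial * ferrersP n m v * assocQ n m u *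
      (deriv (assocP n m) u₀ * b)) = ((n - m).factorial : ℝ) / (n + m).factorial * (-1) ^ m * (u₀ ^ 2 - 1) *
      deriv (assocP n m) u₀ * assocQ n m u * (N * ferrersP n m v) := by
    rw [← hbb]
    have := pi_pos
    field_simp
  rw [key, Complex.ofReal_mul, mul_assoc]
end
end
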